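/- Under Assumption B, the correlation (L²) dimension of ν satisfies dim_C(ν) ≥ min(2, 1 + log(Nc)/(−log b)); equivalently, τ(2) = liminf_{r→0⁺} (log Σ_i ν(B_i^{(r)})²)/(log r) ≥ min(2, 1 + log(Nc)/(−log b)), where for each r > 0 the B_i^{(r)} are the r-mesh squares intersecting the support of ν. -/

import Mathlib

open MeasureTheory Filter Set Topology
open scoped ENNReal

noncomputable section

/-- One triangular affine map `S_i(x,y) = (c x + u_i, d_i x + b y + v_i)`. -/
def Smap {N : ℕ} (c b : ℝ) (u v d : Fin N → ℝ) (i : Fin N) (p : ℝ × ℝ) : ℝ × ℝ :=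
  (c * p.1 + u i, d i * p.1 + b * p.2 + v i)

/-- Composition along a finite word: `Sword [i₁,…,iₙ] = S_{i₁} ∘ ⋯ ∘ S_{iₙ}`. -/
def Sword {N : ℕ} (c b : ℝ) (u v d : Fin N → ℝ) : List (Fin N) → (ℝ × ℝ) → ℝ × ℝ
  | [] => id
  | i :: w => Smap c b u v d i ∘ Sword c b u v d w

/-- The closed unit square `[0,1]²`. -/
def unitSq : Set (ℝ × ℝ) := Set.Icc 0 1 ×ˢ Set.Icc 0 1

/-- The length-`n` prefix of an infinite word, as a list. -/
def prefixWord {N : ℕ} (i : ℕ → Fin N) (n : ℕ) : List (Fin N) :=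
  List.ofFn (fun k : Fin n => i k)

/-- The transversality condition: there is `c₃ > 0` such that for every `n` and all
`𝐢, 𝐣` with different first symbols, the projection to the `x`-axis of the intersection
of the two level-`n` cylinder parallelograms has diameter `< c₃ bⁿ`. -/
def Transversality (N : ℕ) (c b : ℝ) (u v d : Fin N → ℝ) : Prop :=
  ∃ c₃ > (0 : ℝ), ∀ (n : ℕ) (i j : ℕ → Fin N), i 0 ≠ j 0 →
    Metric.diam (Prod.fst '' (Sword c b u v d (prefixWord i n) '' unitSq ∩
      Sword c b u v d (prefixWord j n) '' unitSq)) < c₃ * b ^ n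

/-- `μ` is the uniform Bernoulli measure `(1/N,…,1/N)^ℕ` on the symbolic space. -/
def IsUniformBernoulli (N : ℕ) (μ : Measure (ℕ → Fin N)) : Prop :=
  IsProbabilityMeasure μ ∧ ∀ (n : ℕ) (w : Fin n → Fin N),
    μ {x | ∀ k : Fin n, x (k : ℕ) = w k} = (1 / (N : ℝ≥0∞)) ^ n

/-- `m` is absolutely continuous w.r.t. Lebesgue measure with an `L^q` density. -/
def HasLqDensity (m : Measure ℝ) (q : ℝ) : Prop :=
  ∃ φ : ℝ → ℝ≥0∞, m = MeasureTheory.volume.withDensity φ ∧ (∫⁻ t, φ t ^ q) < ⊤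

/-- The Hausdorff dimension of a measure: the infimum of Hausdorff dimensions
of sets of full measure. -/
def measureDimH {X : Type*} [EMetricSpace X] [MeasurableSpace X] (m : Measure X) : ℝ≥0∞ :=
  ⨅ (A : Set X) (_ : m Aᶜ = 0), dimH A

/-- The sum `Σ_i 𝔪(B_i^{(r)})²` over the `r`-mesh squares (squares of the grid of mesh
size `r`; squares disjoint from the support contribute `0`). -/
def meshSum (m : Measure (ℝ × ℝ)) (r : ℝ) : ℝ≥0∞ :=
  ∑' p : ℤ × ℤ,
    (m (Set.Ico ((p.1 : ℝ) * r) ((p.1 + 1 : ℝ) * r) ×ˢ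
        Set.Ico ((p.2 : ℝ) * r) ((p.2 + 1 : ℝ) * r))) ^ 2

/-!
For `r` comparable to `b ^ n`, the mass of a square of mesh `r` is at most the number of strips
`S_w([0,1]²)`, `|w| = n`, that meet it times the mass `N⁻ⁿ ν_x(I)` which such a strip carries over
an interval of length `r`, where `I` has length of order `r / c ^ n`; Hölder's inequality gives
`ν_x(I) ≤ C |I| ^ θ` for every `θ < 1`. By Cauchy–Schwarz the mesh sum is then controlled by the
number of pairs of strips through a common grid vertex, and a pair whose overlap has horizontal
width `δ` shares `O(δ / r + 1)` vertices. If the two words separate after `k` letters,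
transversality gives `δ = O(c ^ k * b ^ (n - k))`. The number of overlapping pairs that separate at
once is again bounded through `ν_x`: `h` letters after generation `m` an overlap of width `O(b ^ m)`
is met by at most `O((N * c ^ θ) ^ h)` continuations of either word, so that there are
`O((N * c ^ θ) ^ (2 * n))` such pairs of length `n`. Summing over `k`, the mesh sum decays at the
rate `max (b ^ 2) (b / (N * c))` per generation as `θ → 1`.
-/

/-! ### Counting in grids -/

section Counting

open scoped Finset

/-- The vertex with index `k` of the grid of mesh size `r`. -/
def latticePoint (r : ℝ) (k : ℤ × ℤ) : ℝ × ℝ := (k.1 * r, k.2 * r)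

/-- The square with index `k` of the grid of mesh size `r`, as it occurs in `meshSum`. -/
def meshCell (r : ℝ) (k : ℤ × ℤ) : Set (ℝ × ℝ) :=
  Ico ((k.1 : ℝ) * r) ((k.1 + 1 : ℝ) * r) ×ˢ Ico ((k.2 : ℝ) * r) ((k.2 + 1 : ℝ) * r)

lemma exists_int_mul_mem_Icc_near {r l L x : ℝ} (hr : 0 < r) (hrL : r ≤ L)
    (hx : x ∈ Icc l (l + L)) : ∃ k : ℤ, (k : ℝ) * r ∈ Icc l (l + L) ∧ |k * r - x| ≤ r := by
  obtain ⟨k, ⟨hk₁, hk₂⟩, -⟩ := existsUnique_add_zsmul_mem_Ico hr 0 (max l (x - r))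
  rw [zero_add, zsmul_eq_mul] at hk₁ hk₂
  have ha : max l (x - r) ≤ l + L - r := max_le (by linarith) (by linarith [hx.2])
  have ha' : max l (x - r) ≤ x := max_le hx.1 (by linarith)
  exact ⟨k, ⟨(le_max_left _ _).trans hk₁, by linarith⟩,
    abs_le.2 ⟨by linarith [(le_max_right l (x - r)).trans hk₁], by linarith⟩⟩

lemma abs_int_sub_le_of_mem_Ico {r t x : ℝ} (hr : 0 < r) {k p : ℤ}
    (hx : x ∈ Ico ((p : ℝ) * r) ((p + 1 : ℝ) * r)) (hkx : |k * r - x| ≤ t * r) :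
    |((k - p : ℤ) : ℝ)| ≤ t + 1 := by
  refine le_of_mul_le_mul_right ?_ hr
  rw [← abs_of_pos hr, ← abs_mul, abs_of_pos hr, abs_le]
  push_cast
  constructor <;> linarith [(abs_le.1 hkx).1, (abs_le.1 hkx).2, hx.1, hx.2]

lemma card_le_of_forall_sub_le {T : Finset ℤ} {δ : ℝ} (hδ : 0 ≤ δ)
    (h : ∀ x ∈ T, ∀ y ∈ T, (x : ℝ) - y ≤ δ) : (#T : ℝ) ≤ δ + 1 := by
  obtain rfl | hT := T.eq_empty_or_nonempty
  · simpa using add_nonneg hδ zero_le_one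
  have hsub : T ⊆ Finset.Icc (T.min' hT) (T.max' hT) := fun x hx =>
    Finset.mem_Icc.2 ⟨T.min'_le x hx, T.le_max' x hx⟩
  have hle : T.min' hT ≤ T.max' hT := T.min'_le _ (T.max'_mem hT)
  have hcard : (#T : ℤ) ≤ T.max' hT - T.min' hT + 1 := by
    have := Finset.card_le_card hsub
    rw [Int.card_Icc] at this
    omega
  have hdiff := h _ (T.max'_mem hT) _ (T.min'_mem hT)
  have hcard : (#T : ℝ) ≤ T.max' hT - T.min' hT + 1 := by exact_mod_cast hcard
  linarith

lemma card_le_of_forall_sub_le_prod {T : Finset (ℤ × ℤ)} {δ β : ℝ} (hδ : 0 ≤ δ) (hβ : 0 ≤ β)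
    (h₁ : ∀ p ∈ T, ∀ q ∈ T, (p.1 : ℝ) - q.1 ≤ δ)
    (h₂ : ∀ p ∈ T, ∀ q ∈ T, p.1 = q.1 → (p.2 : ℝ) - q.2 ≤ β) :
    (#T : ℝ) ≤ (δ + 1) * (β + 1) := by
  have hfst : (#(T.image Prod.fst) : ℝ) ≤ δ + 1 := by
    refine card_le_of_forall_sub_le hδ fun x hx y hy => ?_
    obtain ⟨p, hp, rfl⟩ := Finset.mem_image.1 hx
    obtain ⟨q, hq, rfl⟩ := Finset.mem_image.1 hy
    exact h₁ p hp q hq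
  have hfibre : ∀ x ∈ T.image Prod.fst, (#{p ∈ T | p.1 = x} : ℝ) ≤ β + 1 := fun x _ => by
    have hinj : Set.InjOn Prod.snd (Finset.filter (fun p => p.1 = x) T : Set (ℤ × ℤ)) := by
      intro p hp q hq hpq
      exact Prod.ext ((Finset.mem_filter.1 hp).2.trans (Finset.mem_filter.1 hq).2.symm) hpq
    rw [← Finset.card_image_of_injOn hinj]
    refine card_le_of_forall_sub_le hβ fun y hy y' hy' => ?_
    obtain ⟨p, hp, rfl⟩ := Finset.mem_image.1 hy
    obtain ⟨q, hq, rfl⟩ := Finset.mem_image.1 hy'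
    rw [Finset.mem_filter] at hp hq
    exact h₂ p hp.1 q hq.1 (hp.2.trans hq.2.symm)
  calc (#T : ℝ) = ∑ x ∈ T.image Prod.fst, (#{p ∈ T | p.1 = x} : ℝ) := by
        exact_mod_cast Finset.card_eq_sum_card_image Prod.fst T
    _ ≤ #(T.image Prod.fst) * (β + 1) := by
        simpa only [nsmul_eq_mul] using Finset.sum_le_card_nsmul _ _ _ hfibre
    _ ≤ (δ + 1) * (β + 1) := by gcongr

lemma card_le_card_mul_of_forall_exists {α β γ : Type*} {s : Finset γ}
    {t : Finset α} {f : α → β → γ} {G : α → Finset β} {X : ℝ} (hG : ∀ a ∈ t, (#(G a) : ℝ) ≤ X)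
    (h : ∀ x ∈ s, ∃ a ∈ t, ∃ b ∈ G a, f a b = x) : (#s : ℝ) ≤ #t * X := by
  classical
  have hsub : s ⊆ t.biUnion fun a => (G a).image (f a) := fun x hx => by
    simpa only [Finset.mem_biUnion, Finset.mem_image] using h x hx
  calc (#s : ℝ) ≤ ∑ a ∈ t, (#((G a).image (f a)) : ℝ) := by
        exact_mod_cast (Finset.card_le_card hsub).trans Finset.card_biUnion_le
    _ ≤ ∑ _a ∈ t, X := Finset.sum_le_sum fun a ha =>
        (Nat.cast_le.2 Finset.card_image_le).trans (hG a ha)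
    _ = #t * X := by rw [Finset.sum_const, nsmul_eq_mul]

end Counting

/-! ### Frostman bounds from integrable densities -/

section Frostman

/-- The Frostman condition with constant `C` and exponent `θ`: balls of radius `ρ` have mass at
most `C * ρ ^ θ`. -/
def IsFrostman (m : Measure ℝ) (C : NNReal) (θ : ℝ) : Prop :=
  ∀ x ρ, m (Metric.closedBall x ρ) ≤ C * ENNReal.ofReal ρ ^ θ

lemma IsFrostman.measureReal_closedBall_le {m : Measure ℝ} {C : NNReal} {θ : ℝ}
    (h : IsFrostman m C θ) (hθ : 0 ≤ θ) (x : ℝ) {ρ : ℝ} (hρ : 0 ≤ ρ) :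
    m.real (Metric.closedBall x ρ) ≤ C * ρ ^ θ := by
  have := ENNReal.toReal_mono
    (ENNReal.mul_ne_top ENNReal.coe_ne_top (ENNReal.rpow_ne_top_of_nonneg hθ ENNReal.ofReal_ne_top))
    (h x ρ)
  rwa [ENNReal.toReal_mul, ENNReal.coe_toReal, ← ENNReal.toReal_rpow,
    ENNReal.toReal_ofReal hρ] at this

-- The density need not be measurable, so Hölder's inequality is applied to a measurable minorant
-- with the same integral over the ball.
lemma HasLqDensity.exists_isFrostman {m : Measure ℝ} {q : ℝ} (hq : 1 < q) (h : HasLqDensity m q) :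
    ∃ C : NNReal, IsFrostman m C (1 - 1 / q) := by
  obtain ⟨φ, rfl, hφ⟩ := h
  have hq0 : 0 < q := zero_lt_one.trans hq
  have hqq : q.HolderConjugate (1 - 1 / q)⁻¹ := by
    rw [Real.holderConjugate_iff]
    exact ⟨hq, by rw [inv_inv]; ring⟩
  have hθ : 0 ≤ 1 - 1 / q := sub_nonneg.2 ((div_le_one hq0).2 hq.le)
  have hnorm : (∫⁻ t, φ t ^ q) ^ (1 / q) ≠ ⊤ :=
    ENNReal.rpow_ne_top_of_nonneg (by positivity) hφ.ne
  refine ⟨((∫⁻ t, φ t ^ q) ^ (1 / q)).toNNReal * 2 ^ (1 - 1 / q), fun x ρ => ?_⟩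
  rw [withDensity_apply _ measurableSet_closedBall]
  obtain ⟨g, hg, hgφ, hgint⟩ :=
    exists_measurable_le_lintegral_eq (volume.restrict (Metric.closedBall x ρ)) φ
  calc ∫⁻ t in Metric.closedBall x ρ, φ t
      = ∫⁻ t in Metric.closedBall x ρ, (g * 1) t := by rw [hgint, mul_one]
    _ ≤ (∫⁻ t in Metric.closedBall x ρ, g t ^ q) ^ (1 / q) *
          ENNReal.ofReal (2 * ρ) ^ (1 - 1 / q) := by
        have := ENNReal.lintegral_mul_le_Lp_mul_Lq (volume.restrict (Metric.closedBall x ρ)) hqq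
          hg.aemeasurable (aemeasurable_const (b := (1 : ℝ≥0∞)))
        simp only [ENNReal.one_rpow, lintegral_one, Measure.restrict_apply_univ,
          Real.volume_closedBall, one_div, inv_inv] at this ⊢
        exact this
    _ ≤ (∫⁻ t, φ t ^ q) ^ (1 / q) * ENNReal.ofReal (2 * ρ) ^ (1 - 1 / q) := by
        refine mul_le_mul_left (ENNReal.rpow_le_rpow ?_ (by positivity)) _
        exact (lintegral_mono fun t => ENNReal.rpow_le_rpow (hgφ t) hq0.le).trans
          (setLIntegral_le_lintegral _ _)
    _ = _ := by
        rw [ENNReal.coe_mul, ENNReal.coe_toNNReal hnorm,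
          ENNReal.coe_rpow_of_nonneg _ hθ, ENNReal.ofReal_mul zero_le_two,
          ENNReal.mul_rpow_of_nonneg _ _ hθ, mul_assoc, ENNReal.ofReal_ofNat]
        rfl

end Frostman

lemma exists_forall_le_mul_pow {a : ℕ → ℝ} {Q : ℝ} (hQ : 0 < Q) (ha : ∀ m, 0 ≤ a m) {h m₀ : ℕ}
    (hh : 0 < h) (hrec : ∀ m, m₀ ≤ m → a (m + h) ≤ a m * Q ^ h) :
    ∃ K, ∀ m, a m ≤ K * Q ^ m := by
  refine ⟨∑ m ∈ Finset.range (m₀ + h), a m / Q ^ m, fun m => ?_⟩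
  induction m using Nat.strong_induction_on with
  | _ m ih =>
    by_cases hm : m < m₀ + h
    · rw [← div_le_iff₀ (by positivity)]
      exact Finset.single_le_sum (f := fun m => a m / Q ^ m)
        (fun i _ => div_nonneg (ha i) (by positivity)) (Finset.mem_range.2 hm)
    · obtain ⟨k, rfl⟩ : ∃ k, m = k + h := ⟨m - h, by omega⟩
      calc a (k + h) ≤ a k * Q ^ h := hrec k (by omega)
        _ ≤ (∑ m ∈ Finset.range (m₀ + h), a m / Q ^ m) * Q ^ k * Q ^ h := by
          gcongr
          exact ih k (by omega)
        _ = _ := by rw [pow_add, mul_assoc]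

/-! ### Geometry of strips -/

/-- The data of a diagonally homogeneous triangular IFS `S_i(x,y) = (c x + u_i, d_i x + b y + v_i)`,
bundled so that the objects built from it need not carry five parameters. -/
structure TriangularIFS (N : ℕ) where
  (c b : ℝ)
  (u v d : Fin N → ℝ)

namespace TriangularIFS

variable {N : ℕ} (S : TriangularIFS N)

/-- The generating map `S_i`. -/
abbrev map (i : Fin N) : ℝ × ℝ → ℝ × ℝ := Smap S.c S.b S.u S.v S.d i

/-- The composition `S_w = S_{i₁} ∘ ⋯ ∘ S_{iₙ}` along a finite word. -/
abbrev wordMap (w : List (Fin N)) : ℝ × ℝ → ℝ × ℝ := Sword S.c S.b S.u S.v S.d w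

/-- The cylinder parallelogram `S_w([0,1]²)`, a strip of width `c ^ |w|` and height `b ^ |w|`. -/
def strip (w : List (Fin N)) : Set (ℝ × ℝ) := S.wordMap w '' unitSq

/-- The standing assumption that every generating map sends the unit square into itself. -/
def MapsUnitSq : Prop := ∀ i, S.map i '' unitSq ⊆ unitSq

/-- The left end of the projection of `S.strip w` to the `x`-axis. -/
def left : List (Fin N) → ℝ
  | [] => 0
  | i :: w => S.c * left w + S.u i

/-- The affine function whose graph carries the lower edge of `S.strip w`. -/
def lower : List (Fin N) → ℝ → ℝ
  | [], _ => 0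
  | i :: w, x =>
    S.d i * ((x - S.u i) / S.c) + S.b * lower w ((x - S.u i) / S.c) + S.v i

/-- A common bound for the slopes of all strips. -/
def slope : ℝ := (∑ i, |S.d i|) / (S.c - S.b)

/-- `WidthLE A ρ` says that the projection of `A` to the `x`-axis has diameter at most `ρ`. -/
def WidthLE (A : Set (ℝ × ℝ)) (ρ : ℝ) : Prop := ∀ p ∈ A, ∀ q ∈ A, |p.1 - q.1| ≤ ρ

variable {S}

lemma wordMap_append (w w' : List (Fin N)) :
    S.wordMap (w ++ w') = S.wordMap w ∘ S.wordMap w' := by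
  induction w with
  | nil => rfl
  | cons i w ih => simp only [List.cons_append, wordMap, Sword, ih, Function.comp_assoc]

lemma fst_wordMap (w : List (Fin N)) (p : ℝ × ℝ) :
    (S.wordMap w p).1 = S.c ^ w.length * p.1 + S.left w := by
  induction w with
  | nil => simp [Sword, left]
  | cons i w ih =>
    simp only [wordMap, Sword, Function.comp_apply, Smap, left, List.length_cons] at ih ⊢
    rw [ih]
    ring

lemma continuous_map (i : Fin N) : Continuous (S.map i) := by
  unfold map Smap
  fun_prop

lemma continuous_wordMap (w : List (Fin N)) : Continuous (S.wordMap w) := by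
  induction w with
  | nil => exact continuous_id
  | cons i w ih => exact (continuous_map i).comp ih

lemma map_bijective (hc : S.c ≠ 0) (hb : S.b ≠ 0) (i : Fin N) : Function.Bijective (S.map i) := by
  refine Function.bijective_iff_has_inverse.2 ⟨fun z =>
    ((z.1 - S.u i) / S.c, (z.2 - S.v i - S.d i * ((z.1 - S.u i) / S.c)) / S.b),
    fun z => ?_, fun z => ?_⟩ <;>
  · ext <;> simp only [map, Smap] <;> field_simp <;> ring

lemma isCompact_strip (w : List (Fin N)) : IsCompact (S.strip w) :=
  (isCompact_Icc.prod isCompact_Icc).image (continuous_wordMap w)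

@[simp]
lemma strip_nil : S.strip [] = unitSq := image_id _

lemma strip_append (w w' : List (Fin N)) : S.strip (w ++ w') = S.wordMap w '' S.strip w' := by
  rw [strip, wordMap_append, image_comp, strip]

lemma strip_cons (i : Fin N) (w : List (Fin N)) : S.strip (i :: w) = S.map i '' S.strip w :=
  strip_append [i] w

lemma strip_subset_unitSq (hmaps : S.MapsUnitSq) (w : List (Fin N)) : S.strip w ⊆ unitSq := by
  induction w with
  | nil => exact strip_nil.subset
  | cons i w ih =>
    rw [strip_cons]
    exact (image_mono ih).trans (hmaps i)

lemma strip_append_subset (hmaps : S.MapsUnitSq) (w w' : List (Fin N)) :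
    S.strip (w ++ w') ⊆ S.strip w := by
  rw [strip_append]
  exact image_mono (strip_subset_unitSq hmaps w')

lemma map_mem_strip_cons (hc : S.c ≠ 0) (hb : S.b ≠ 0) {i : Fin N} {w : List (Fin N)} {z : ℝ × ℝ} :
    S.map i z ∈ S.strip (i :: w) ↔ z ∈ S.strip w := by
  rw [strip_cons, (map_bijective hc hb i).injective.mem_set_image]

lemma mem_strip_iff (hc : 0 < S.c) (hb : 0 < S.b) {w : List (Fin N)} {z : ℝ × ℝ} :
    z ∈ S.strip w ↔ z.1 ∈ Icc (S.left w) (S.left w + S.c ^ w.length) ∧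
      z.2 ∈ Icc (S.lower w z.1) (S.lower w z.1 + S.b ^ w.length) := by
  induction w generalizing z with
  | nil =>
    simp only [strip_nil, unitSq, mem_prod, left, lower, List.length_nil, pow_zero, zero_add]
  | cons i w ih =>
    obtain ⟨z, rfl⟩ := (map_bijective hc.ne' hb.ne' i).surjective z
    have hx : (S.c * z.1 + S.u i - S.u i) / S.c = z.1 := by field_simp; ring
    rw [map_mem_strip_cons hc.ne' hb.ne', ih]
    simp only [map, Smap, left, lower, hx, List.length_cons, pow_succ', mem_Icc]
    refine and_congr (and_congr ?_ ?_) (and_congr ?_ ?_)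
    · rw [add_le_add_iff_right, mul_le_mul_iff_right₀ hc]
    · rw [add_right_comm, add_le_add_iff_right, ← mul_add, mul_le_mul_iff_right₀ hc]
    · rw [add_le_add_iff_right, add_le_add_iff_left, mul_le_mul_iff_right₀ hb]
    · rw [← mul_le_mul_iff_right₀ hb]
      constructor <;> intro h <;> linarith

lemma slope_nonneg (hbc : S.b < S.c) : 0 ≤ S.slope :=
  div_nonneg (Finset.sum_nonneg fun _ _ => abs_nonneg _) (sub_pos.2 hbc).le

lemma abs_lower_sub_lower_le (hb : 0 < S.b) (hbc : S.b < S.c) (w : List (Fin N)) (x x' : ℝ) :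
    |S.lower w x - S.lower w x'| ≤ S.slope * |x - x'| := by
  have hc := hb.trans hbc
  induction w generalizing x x' with
  | nil => simpa [lower] using mul_nonneg (slope_nonneg hbc) (abs_nonneg _)
  | cons i w ih =>
    set X := (x - S.u i) / S.c with hX
    set X' := (x' - S.u i) / S.c with hX'
    have hXX' : |x - x'| = S.c * |X - X'| := by
      have : x - x' = S.c * (X - X') := by
        rw [hX, hX']
        field_simp
        ring
      rw [this, abs_mul, abs_of_pos hc]
    have hslope : ∑ j, |S.d j| = S.slope * (S.c - S.b) :=
      (div_mul_cancel₀ _ (sub_pos.2 hbc).ne').symm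
    have hd : |S.d i| ≤ S.slope * (S.c - S.b) :=
      hslope ▸ Finset.single_le_sum (f := fun j => |S.d j|) (fun j _ => abs_nonneg _)
        (Finset.mem_univ i)
    calc |S.lower (i :: w) x - S.lower (i :: w) x'|
        = |S.d i * (X - X') + S.b * (S.lower w X - S.lower w X')| := by
          simp only [lower, ← hX, ← hX']
          congr 1
          ring
      _ ≤ |S.d i| * |X - X'| + S.b * |S.lower w X - S.lower w X'| := by
          refine (abs_add_le _ _).trans_eq ?_
          rw [abs_mul, abs_mul, abs_of_pos hb]
      _ ≤ S.slope * (S.c - S.b) * |X - X'| + S.b * (S.slope * |X - X'|) := by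
          gcongr
          exact ih X X'
      _ = S.slope * |x - x'| := by rw [hXX']; ring

lemma widthLE_strip (hc : 0 ≤ S.c) (w : List (Fin N)) :
    WidthLE (S.strip w) (S.c ^ w.length) := by
  rintro _ ⟨p, hp, rfl⟩ _ ⟨q, hq, rfl⟩
  rw [fst_wordMap, fst_wordMap, add_sub_add_right_eq_sub, ← mul_sub, abs_mul,
    abs_of_nonneg (pow_nonneg hc _)]
  have hpq : |p.1 - q.1| ≤ 1 := by
    simpa using abs_sub_le_of_le_of_le hp.1.1 hp.1.2 hq.1.1 hq.1.2
  exact mul_le_of_le_one_right (pow_nonneg hc _) hpq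

lemma WidthLE.preimage_wordMap (hc : 0 < S.c) {A : Set (ℝ × ℝ)} {ρ : ℝ} (hA : WidthLE A ρ)
    (w : List (Fin N)) : WidthLE (S.wordMap w ⁻¹' A) (ρ / S.c ^ w.length) := by
  intro p hp q hq
  have h := hA _ hp _ hq
  rw [fst_wordMap, fst_wordMap, add_sub_add_right_eq_sub, ← mul_sub, abs_mul,
    abs_of_pos (pow_pos hc _)] at h
  rwa [le_div_iff₀' (pow_pos hc _)]

lemma abs_snd_sub_le (hc : 0 < S.c) (hb : 0 < S.b) {w : List (Fin N)} {p q : ℝ × ℝ}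
    (hp : p ∈ S.strip w) (hq : q ∈ S.strip w) (h : p.1 = q.1) : |p.2 - q.2| ≤ S.b ^ w.length := by
  have hp := ((mem_strip_iff hc hb).1 hp).2
  have hq := ((mem_strip_iff hc hb).1 hq).2
  rw [h] at hp
  simpa using abs_sub_le_of_le_of_le hp.1 hp.2 hq.1 hq.2

end TriangularIFS

namespace TriangularIFS

variable {N : ℕ} {S : TriangularIFS N}

lemma exists_latticePoint_mem_strip (hb : 0 < S.b) (hbc : S.b < S.c) {w : List (Fin N)} {r : ℝ}
    (hr : 0 < r) (hrw : r ≤ S.b ^ w.length) {z : ℝ × ℝ} (hz : z ∈ S.strip w) :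
    ∃ k : ℤ × ℤ, latticePoint r k ∈ S.strip w ∧ |k.1 * r - z.1| ≤ r ∧
      |k.2 * r - z.2| ≤ S.slope * r + S.b ^ w.length := by
  have hc := hb.trans hbc
  have hz := (mem_strip_iff hc hb).1 hz
  obtain ⟨i, hi, hiz⟩ := exists_int_mul_mem_Icc_near hr
    (hrw.trans (pow_le_pow_left₀ hb.le hbc.le _)) hz.1
  obtain ⟨j, hj, -⟩ := exists_int_mul_mem_Icc_near hr hrw
    (left_mem_Icc.2 (le_add_of_nonneg_right (pow_nonneg hb.le _)) :
      S.lower w (i * r) ∈ Icc _ (S.lower w (i * r) + S.b ^ w.length))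
  refine ⟨(i, j), (mem_strip_iff hc hb).2 ⟨hi, hj⟩, hiz, ?_⟩
  have hlower := (abs_lower_sub_lower_le hb hbc w (i * r) z.1).trans
    (mul_le_mul_of_nonneg_left hiz (slope_nonneg hbc))
  rw [abs_le] at hlower ⊢
  constructor <;> linarith [hj.1, hj.2, hz.2.1, hz.2.2, hlower.1, hlower.2]

variable (S) in
/-- A number of grid steps within which every grid square meeting a strip of comparable height
sees a grid vertex of that strip. -/
def reach : ℤ := ⌈S.slope + 1 / S.b⌉ + 1

variable (S) in
/-- The index displacements of size at most `S.reach`. -/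
def offsets : Finset (ℤ × ℤ) := Finset.Icc (-S.reach, -S.reach) (S.reach, S.reach)

lemma mem_offsets_of_abs_le {f : ℤ × ℤ} (h₁ : |(f.1 : ℝ)| ≤ S.slope + 1 / S.b + 1)
    (h₂ : |(f.2 : ℝ)| ≤ S.slope + 1 / S.b + 1) : f ∈ S.offsets := by
  have hreach : S.slope + 1 / S.b + 1 ≤ (S.reach : ℝ) := by
    rw [reach, Int.cast_add, Int.cast_one]
    gcongr
    exact Int.le_ceil _
  have h₁ : |f.1| ≤ S.reach := by exact_mod_cast h₁.trans hreach
  have h₂ : |f.2| ≤ S.reach := by exact_mod_cast h₂.trans hreach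
  exact Finset.mem_Icc.2 ⟨⟨(abs_le.1 h₁).1, (abs_le.1 h₂).1⟩, ⟨(abs_le.1 h₁).2, (abs_le.1 h₂).2⟩⟩

lemma exists_offset_latticePoint_mem_strip (hb : 0 < S.b) (hb1 : S.b < 1) (hbc : S.b < S.c)
    {w : List (Fin N)} {r : ℝ} (hrw' : S.b ^ (w.length + 1) < r) (hrw : r ≤ S.b ^ w.length)
    {p : ℤ × ℤ} (hp : (S.strip w ∩ meshCell r p).Nonempty) :
    ∃ f ∈ S.offsets, latticePoint r (p + f) ∈ S.strip w := by
  obtain ⟨z, hzw, hz₁, hz₂⟩ := hp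
  have hr : 0 < r := (pow_pos hb _).trans hrw'
  obtain ⟨k, hk, hk₁, hk₂⟩ := exists_latticePoint_mem_strip hb hbc hr hrw hzw
  have hone : 1 ≤ S.slope + 1 / S.b := by
    linarith [slope_nonneg hbc, (one_le_div hb).2 hb1.le]
  have hheight : S.b ^ w.length ≤ 1 / S.b * r := by
    rw [div_mul_eq_mul_div, one_mul, le_div_iff₀ hb, ← pow_succ]
    exact hrw'.le
  refine ⟨k - p, mem_offsets_of_abs_le ?_ ?_, by rwa [add_sub_cancel]⟩
  · exact abs_int_sub_le_of_mem_Ico hr hz₁ (hk₁.trans (le_mul_of_one_le_left hr.le hone))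
  · refine abs_int_sub_le_of_mem_Ico hr hz₂ (hk₂.trans ?_)
    rw [add_mul]
    gcongr

end TriangularIFS

/-! ### Words and pairs of words with meeting strips -/

namespace TriangularIFS

open scoped Finset

variable {N : ℕ} {S : TriangularIFS N}

open Classical in
variable (S) in
/-- The words of length `n` whose strips meet `A`. -/
def wordsMeeting (n : ℕ) (A : Set (ℝ × ℝ)) : Finset (Fin n → Fin N) :=
  {w | (S.strip (List.ofFn w) ∩ A).Nonempty}

lemma mem_wordsMeeting {n : ℕ} {A : Set (ℝ × ℝ)} {w : Fin n → Fin N} :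
    w ∈ S.wordsMeeting n A ↔ (S.strip (List.ofFn w) ∩ A).Nonempty := by
  simp only [wordsMeeting, Finset.mem_filter, Finset.mem_univ, true_and]

lemma mem_wordsMeeting_singleton {n : ℕ} {z : ℝ × ℝ} {w : Fin n → Fin N} :
    w ∈ S.wordsMeeting n {z} ↔ z ∈ S.strip (List.ofFn w) := by
  rw [mem_wordsMeeting, inter_singleton_nonempty]

lemma mem_wordsMeeting_of_append (hmaps : S.MapsUnitSq) {n h : ℕ} {A : Set (ℝ × ℝ)}
    {w : Fin n → Fin N} {w' : Fin h → Fin N} (hw : Fin.append w w' ∈ S.wordsMeeting (n + h) A) :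
    w ∈ S.wordsMeeting n A ∧ w' ∈ S.wordsMeeting h (S.wordMap (List.ofFn w) ⁻¹' A) := by
  simp only [mem_wordsMeeting, List.ofFn_fin_append] at hw ⊢
  refine ⟨hw.mono (inter_subset_inter_left _ (strip_append_subset hmaps _ _)), ?_⟩
  rwa [strip_append, image_inter_nonempty_iff] at hw

lemma card_wordsMeeting_add_le (hmaps : S.MapsUnitSq) {n h : ℕ} {A : Set (ℝ × ℝ)} {X : ℝ}
    (hX : ∀ w : Fin n → Fin N, (#(S.wordsMeeting h (S.wordMap (List.ofFn w) ⁻¹' A)) : ℝ) ≤ X) :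
    (#(S.wordsMeeting (n + h) A) : ℝ) ≤ #(S.wordsMeeting n A) * X := by
  refine card_le_card_mul_of_forall_exists (f := fun w w' => Fin.append w w')
    (fun w _ => hX w) fun x hx => ?_
  obtain ⟨⟨w, w'⟩, rfl⟩ := (Fin.appendEquiv n h).surjective x
  have hw := mem_wordsMeeting_of_append hmaps hx
  exact ⟨w, hw.1, w', hw.2, rfl⟩

/-- The diameter of the projection to the `x`-axis of the intersection of two strips. -/
def overlapWidth (S : TriangularIFS N) (w w' : List (Fin N)) : ℝ :=
  Metric.diam (Prod.fst '' (S.strip w ∩ S.strip w'))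

lemma overlapWidth_nonneg (w w' : List (Fin N)) : 0 ≤ S.overlapWidth w w' := Metric.diam_nonneg

lemma widthLE_strip_inter_strip (w w' : List (Fin N)) :
    WidthLE (S.strip w ∩ S.strip w') (S.overlapWidth w w') := fun _ hp _ hq =>
  Metric.dist_le_diam_of_mem
    (((isCompact_strip w).inter_right (isCompact_strip w').isClosed).image continuous_fst).isBounded
    (mem_image_of_mem _ hp) (mem_image_of_mem _ hq)

lemma strip_inter_strip_cons (hc : S.c ≠ 0) (hb : S.b ≠ 0) (i : Fin N) (w w' : List (Fin N)) :
    S.strip (i :: w) ∩ S.strip (i :: w') = S.map i '' (S.strip w ∩ S.strip w') := by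
  rw [strip_cons, strip_cons, image_inter (map_bijective hc hb i).injective]

lemma overlapWidth_cons_cons_le (hc : 0 < S.c) (hb : S.b ≠ 0) (i : Fin N) (w w' : List (Fin N)) :
    S.overlapWidth (i :: w) (i :: w') ≤ S.c * S.overlapWidth w w' := by
  refine Metric.diam_le_of_forall_dist_le (mul_nonneg hc.le (overlapWidth_nonneg w w')) ?_
  rw [strip_inter_strip_cons hc.ne' hb]
  rintro _ ⟨_, ⟨p, hp, rfl⟩, rfl⟩ _ ⟨_, ⟨q, hq, rfl⟩, rfl⟩
  rw [Real.dist_eq]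
  simp only [map, Smap]
  rw [add_sub_add_right_eq_sub, ← mul_sub, abs_mul, abs_of_pos hc]
  exact mul_le_mul_of_nonneg_left (widthLE_strip_inter_strip w w' p hp q hq) hc.le

open Classical in
variable (S) in
/-- The pairs of words of length `n` with intersecting strips. -/
def overlapPairs (n : ℕ) : Finset ((Fin n → Fin N) × (Fin n → Fin N)) :=
  {x | (S.strip (List.ofFn x.1) ∩ S.strip (List.ofFn x.2)).Nonempty}

open Classical in
variable (S) in
/-- The pairs of words of length `n` with intersecting strips and different first letters. -/
def branchingPairs (n : ℕ) : Finset ((Fin n → Fin N) × (Fin n → Fin N)) :=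
  {x ∈ S.overlapPairs n | ∃ h : 0 < n, x.1 ⟨0, h⟩ ≠ x.2 ⟨0, h⟩}

lemma mem_overlapPairs {n : ℕ} {x : (Fin n → Fin N) × (Fin n → Fin N)} :
    x ∈ S.overlapPairs n ↔ (S.strip (List.ofFn x.1) ∩ S.strip (List.ofFn x.2)).Nonempty := by
  simp only [overlapPairs, Finset.mem_filter, Finset.mem_univ, true_and]

lemma mem_branchingPairs {n : ℕ} {x : (Fin n → Fin N) × (Fin n → Fin N)} :
    x ∈ S.branchingPairs n ↔ (S.strip (List.ofFn x.1) ∩ S.strip (List.ofFn x.2)).Nonempty ∧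
      ∃ h : 0 < n, x.1 ⟨0, h⟩ ≠ x.2 ⟨0, h⟩ := by
  simp only [branchingPairs, Finset.mem_filter, mem_overlapPairs]

variable (S) in
/-- Transversality with constant `c₃`, in terms of finite words. -/
def IsTransversal (c₃ : ℝ) : Prop :=
  ∀ n, ∀ x ∈ S.branchingPairs n, S.overlapWidth (List.ofFn x.1) (List.ofFn x.2) ≤ c₃ * S.b ^ n

lemma _root_.Transversality.exists_isTransversal
    (h : Transversality N S.c S.b S.u S.v S.d) : ∃ c₃, 0 ≤ c₃ ∧ S.IsTransversal c₃ := by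
  obtain ⟨c₃, hc₃0, hc₃⟩ := h
  refine ⟨c₃, hc₃0.le, fun n x hx => ?_⟩
  obtain ⟨-, hn, hx⟩ := mem_branchingPairs.1 hx
  have extend_prefix (w : Fin n → Fin N) :
      prefixWord (fun k => if hk : k < n then w ⟨k, hk⟩ else w ⟨0, hn⟩) n = List.ofFn w :=
    congrArg List.ofFn (funext fun k => dif_pos k.2)
  have hle := (hc₃ n (fun k => if hk : k < n then x.1 ⟨k, hk⟩ else x.1 ⟨0, hn⟩)
    (fun k => if hk : k < n then x.2 ⟨k, hk⟩ else x.2 ⟨0, hn⟩) (by simpa [hn] using hx)).le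
  rw [extend_prefix, extend_prefix] at hle
  exact hle

lemma card_branchingPairs_add_le (hmaps : S.MapsUnitSq) {c₃ : ℝ} (htr : S.IsTransversal c₃)
    {m h : ℕ} (hm : 0 < m) {X : ℝ}
    (hX : ∀ A, WidthLE A (c₃ * S.b ^ m) → ∀ w : Fin m → Fin N,
      (#(S.wordsMeeting h (S.wordMap (List.ofFn w) ⁻¹' A)) : ℝ) ≤ X) :
    (#(S.branchingPairs (m + h)) : ℝ) ≤ #(S.branchingPairs m) * X ^ 2 := by
  let overlap (x : (Fin m → Fin N) × (Fin m → Fin N)) : Set (ℝ × ℝ) :=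
    S.strip (List.ofFn x.1) ∩ S.strip (List.ofFn x.2)
  refine card_le_card_mul_of_forall_exists
    (f := fun x y => (Fin.append x.1 y.1, Fin.append x.2 y.2))
    (G := fun x => S.wordsMeeting h (S.wordMap (List.ofFn x.1) ⁻¹' overlap x) ×ˢ
      S.wordsMeeting h (S.wordMap (List.ofFn x.2) ⁻¹' overlap x)) (fun x hx => ?_) ?_
  · have hA : WidthLE (overlap x) (c₃ * S.b ^ m) := fun p hp q hq =>
      (widthLE_strip_inter_strip _ _ p hp q hq).trans (htr m x hx)
    rw [Finset.card_product, Nat.cast_mul, sq]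
    exact mul_le_mul (hX _ hA _) (hX _ hA _) (Nat.cast_nonneg _)
      ((Nat.cast_nonneg _).trans (hX _ hA x.1))
  rintro ⟨z, z'⟩ hz
  obtain ⟨⟨w, y⟩, rfl⟩ := (Fin.appendEquiv m h).surjective z
  obtain ⟨⟨w', y'⟩, rfl⟩ := (Fin.appendEquiv m h).surjective z'
  obtain ⟨⟨p, hp, hp'⟩, hmh, hne⟩ := mem_branchingPairs.1 hz
  rw [← Fin.castAdd_mk h 0 hm] at hne
  simp only [Fin.appendEquiv, Equiv.coe_fn_mk, Fin.append_left] at hp hp' hne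
  have hpo : p ∈ overlap (w, w') := by
    rw [List.ofFn_fin_append] at hp hp'
    exact ⟨strip_append_subset hmaps _ _ hp, strip_append_subset hmaps _ _ hp'⟩
  refine ⟨(w, w'), mem_branchingPairs.2 ⟨⟨p, hpo⟩, hm, hne⟩, (y, y'), ?_, rfl⟩
  exact Finset.mem_product.2
    ⟨(mem_wordsMeeting_of_append hmaps (mem_wordsMeeting.2 ⟨p, hp, hpo⟩)).2,
      (mem_wordsMeeting_of_append hmaps (mem_wordsMeeting.2 ⟨p, hp', hpo⟩)).2⟩

end TriangularIFS

/-! ### The self-affine measure -/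

lemma prefixWord_add {N : ℕ} (i : ℕ → Fin N) (n k : ℕ) :
    prefixWord i (n + k) = prefixWord i n ++ prefixWord (fun j => i (n + j)) k := by
  simp only [prefixWord, ← List.ofFn_fin_append]
  congr 1
  funext x
  refine Fin.addCases (fun a => ?_) (fun a => ?_) x <;>
    simp only [Fin.append_left, Fin.append_right, Fin.val_castAdd, Fin.val_natAdd]

namespace IsUniformBernoulli

open scoped Finset

variable {N : ℕ} {μ : Measure (ℕ → Fin N)}

/-- The sequences that start with the word `w`. -/
def wordCylinder {n : ℕ} (w : Fin n → Fin N) : Set (ℕ → Fin N) := {x | ∀ k : Fin n, x k = w k}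

lemma measurableSet_wordCylinder {n : ℕ} (w : Fin n → Fin N) :
    MeasurableSet (wordCylinder w) := by
  rw [wordCylinder, ofPred_forall]
  exact MeasurableSet.iInter fun k =>
    measurableSet_eq_fun (measurable_pi_apply _) measurable_const

lemma disjoint_wordCylinder {n : ℕ} {w w' : Fin n → Fin N} (h : w ≠ w') :
    Disjoint (wordCylinder w) (wordCylinder w') :=
  Set.disjoint_left.2 fun _ hx hx' => h (funext fun k => (hx k).symm.trans (hx' k))

lemma natCast_pos (hμ : IsUniformBernoulli N μ) : (0 : ℝ) < N := by
  have := hμ.1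
  obtain ⟨x⟩ := μ.nonempty_of_neZero
  exact Nat.cast_pos.2 (x 0).pos

lemma measureReal_biUnion_wordCylinder (hμ : IsUniformBernoulli N μ) {n : ℕ}
    (s : Finset (Fin n → Fin N)) : μ.real (⋃ w ∈ s, wordCylinder w) = #s / (N : ℝ) ^ n := by
  have := hμ.1
  have hw (w : Fin n → Fin N) : μ.real (wordCylinder w) = 1 / (N : ℝ) ^ n := by
    rw [Measure.real, wordCylinder, hμ.2, ENNReal.toReal_pow, ENNReal.toReal_div]
    simp
  rw [measureReal_biUnion_finset (fun w _ w' _ h => disjoint_wordCylinder h)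
    fun w _ => measurableSet_wordCylinder w]
  simp_rw [hw]
  rw [Finset.sum_const, nsmul_eq_mul, mul_one_div]

end IsUniformBernoulli

namespace TriangularIFS

open scoped Finset
open IsUniformBernoulli

variable {N : ℕ} {S : TriangularIFS N} {Pi : (ℕ → Fin N) → ℝ × ℝ} {μ : Measure (ℕ → Fin N)}

variable (S) in
/-- `Pi` is the natural projection from the symbolic space to the attractor. -/
def IsCodingMap (Pi : (ℕ → Fin N) → ℝ × ℝ) : Prop :=
  ∀ i, Tendsto (fun n => S.wordMap (prefixWord i n) 0) atTop (𝓝 (Pi i))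

lemma IsCodingMap.mem_strip (hPi : S.IsCodingMap Pi) (hmaps : S.MapsUnitSq) (i : ℕ → Fin N)
    (n : ℕ) : Pi i ∈ S.strip (prefixWord i n) := by
  refine (isCompact_strip _).isClosed.mem_of_tendsto (hPi i) ?_
  filter_upwards [eventually_ge_atTop n] with m hm
  obtain ⟨k, rfl⟩ := Nat.exists_eq_add_of_le hm
  rw [prefixWord_add]
  exact strip_append_subset hmaps _ _ (mem_image_of_mem _
    ⟨left_mem_Icc.2 zero_le_one, left_mem_Icc.2 zero_le_one⟩)

lemma IsCodingMap.mem_strip_of_mem_wordCylinder (hPi : S.IsCodingMap Pi) (hmaps : S.MapsUnitSq)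
    {n : ℕ} {w : Fin n → Fin N} {x : ℕ → Fin N} (hx : x ∈ wordCylinder w) :
    Pi x ∈ S.strip (List.ofFn w) := by
  have hw : List.ofFn w = prefixWord x n := congrArg List.ofFn (funext fun k => (hx k).symm)
  exact hw ▸ hPi.mem_strip hmaps x n

lemma IsCodingMap.measurable (hPi : S.IsCodingMap Pi) : Measurable Pi := by
  refine measurable_of_tendsto_metrizable (fun n => ?_) (tendsto_pi_nhds.2 hPi)
  have hword : Measurable fun w : Fin n → Fin N => S.wordMap (List.ofFn w) 0 :=
    Measurable.of_discrete
  exact hword.comp (by fun_prop : Measurable fun (i : ℕ → Fin N) (k : Fin n) => i k)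

lemma measureReal_map_le (hmaps : S.MapsUnitSq) (hPi : S.IsCodingMap Pi)
    (hμ : IsUniformBernoulli N μ) (n : ℕ) {A : Set (ℝ × ℝ)} (hA : MeasurableSet A) :
    (μ.map Pi).real A ≤ #(S.wordsMeeting n A) / (N : ℝ) ^ n := by
  have := hμ.1
  rw [map_measureReal_apply hPi.measurable hA, ← hμ.measureReal_biUnion_wordCylinder]
  refine measureReal_mono (fun x hx => mem_iUnion₂.2 ⟨fun k => x k, ?_, fun _ => rfl⟩)
    (measure_ne_top μ _)
  exact mem_wordsMeeting.2 ⟨Pi x, hPi.mem_strip hmaps x n, hx⟩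

lemma card_wordsMeeting_le (hc : 0 ≤ S.c) (hmaps : S.MapsUnitSq) (hPi : S.IsCodingMap Pi)
    (hμ : IsUniformBernoulli N μ) {C : NNReal} {θ : ℝ} (hθ : 0 ≤ θ)
    (hF : IsFrostman ((μ.map Pi).map Prod.fst) C θ) (h : ℕ) {A : Set (ℝ × ℝ)} {ρ : ℝ} (hρ : 0 ≤ ρ)
    (hA : WidthLE A ρ) :
    (#(S.wordsMeeting h A) : ℝ) ≤ (N : ℝ) ^ h * (C * (ρ + S.c ^ h) ^ θ) := by
  have := hμ.1
  have hρh : 0 ≤ ρ + S.c ^ h := by positivity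
  obtain hempty | ⟨w₀, hw₀⟩ := (S.wordsMeeting h A).eq_empty_or_nonempty
  · rw [hempty, Finset.card_empty, Nat.cast_zero]
    positivity
  obtain ⟨p, -, hp⟩ := mem_wordsMeeting.1 hw₀
  have hsub : ⋃ w ∈ S.wordsMeeting h A, wordCylinder w ⊆
      (Prod.fst ∘ Pi) ⁻¹' Metric.closedBall p.1 (ρ + S.c ^ h) := by
    refine iUnion₂_subset fun w hw x hx => ?_
    obtain ⟨q, hqw, hq⟩ := mem_wordsMeeting.1 hw
    have hxq := widthLE_strip hc _ _ (hPi.mem_strip_of_mem_wordCylinder hmaps hx) _ hqw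
    rw [List.length_ofFn] at hxq
    exact (abs_sub_le (Pi x).1 q.1 p.1).trans (by linarith [hA q hq p hp])
  have hle := (measureReal_mono hsub (measure_ne_top μ _)).trans_eq
    (map_measureReal_apply (measurable_fst.comp hPi.measurable) measurableSet_closedBall).symm
  rw [← Measure.map_map measurable_fst hPi.measurable] at hle
  have hle := hle.trans (hF.measureReal_closedBall_le hθ _ hρh)
  rwa [hμ.measureReal_biUnion_wordCylinder, div_le_iff₀' (pow_pos hμ.natCast_pos _)] at hle

lemma measureReal_map_le_of_widthLE (hc : 0 < S.c) (hc1 : S.c < 1) (hmaps : S.MapsUnitSq)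
    (hPi : S.IsCodingMap Pi) (hμ : IsUniformBernoulli N μ) {C : NNReal} {θ : ℝ} (hθ : 0 ≤ θ)
    (hF : IsFrostman ((μ.map Pi).map Prod.fst) C θ) (n : ℕ) {A : Set (ℝ × ℝ)}
    (hAm : MeasurableSet A) {ρ : ℝ} (hρ : 0 < ρ) (hA : WidthLE A ρ) :
    (μ.map Pi).real A ≤
      #(S.wordsMeeting n A) * (C * (2 * (ρ / S.c ^ n)) ^ θ / (N : ℝ) ^ n) := by
  have hN := hμ.natCast_pos
  have hρn : 0 < ρ / S.c ^ n := by positivity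
  obtain ⟨h, hh⟩ := exists_pow_lt_of_lt_one hρn hc1
  have hcard : (#(S.wordsMeeting (n + h) A) : ℝ) ≤
      #(S.wordsMeeting n A) * ((N : ℝ) ^ h * (C * (2 * (ρ / S.c ^ n)) ^ θ)) := by
    refine card_wordsMeeting_add_le hmaps fun w => ?_
    have hpre := hA.preimage_wordMap hc (List.ofFn w)
    rw [List.length_ofFn] at hpre
    refine (card_wordsMeeting_le hc.le hmaps hPi hμ hθ hF h hρn.le hpre).trans ?_
    gcongr
    linarith
  calc (μ.map Pi).real A ≤ #(S.wordsMeeting (n + h) A) / (N : ℝ) ^ (n + h) :=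
        measureReal_map_le hmaps hPi hμ (n + h) hAm
    _ ≤ #(S.wordsMeeting n A) * ((N : ℝ) ^ h * (C * (2 * (ρ / S.c ^ n)) ^ θ)) /
          (N : ℝ) ^ (n + h) := by gcongr
    _ = #(S.wordsMeeting n A) * (C * (2 * (ρ / S.c ^ n)) ^ θ / (N : ℝ) ^ n) := by
        rw [pow_add]
        field_simp

end TriangularIFS

/-! ### Growth of the number of overlaps -/

namespace TriangularIFS

open scoped Finset

variable {N : ℕ} {S : TriangularIFS N} {Pi : (ℕ → Fin N) → ℝ × ℝ} {μ : Measure (ℕ → Fin N)}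

-- After many steps the overlaps, of width `c₃ * b ^ m`, are much narrower than the strips of
-- generation `m`, of width `c ^ m`, so the Frostman bound limits the number of `h`-step extensions
-- of a branching pair; the constant is absorbed by lowering the exponent from `θ'` to `θ`.
lemma exists_card_branchingPairs_le (hb : 0 < S.b) (hbc : S.b < S.c) (hc1 : S.c < 1)
    (hmaps : S.MapsUnitSq) (hPi : S.IsCodingMap Pi) (hμ : IsUniformBernoulli N μ)
    {c₃ : ℝ} (hc₃ : 0 ≤ c₃) (htr : S.IsTransversal c₃) {C : NNReal} {θ θ' : ℝ} (hθ' : 0 ≤ θ')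
    (hθθ' : θ < θ') (hF : IsFrostman ((μ.map Pi).map Prod.fst) C θ') :
    ∃ K, ∀ m, (#(S.branchingPairs m) : ℝ) ≤ K * (((N : ℝ) * S.c ^ θ) ^ 2) ^ m := by
  have hc : 0 < S.c := hb.trans hbc
  have hN := hμ.natCast_pos
  have hgap : S.c ^ (θ' - θ) < 1 := Real.rpow_lt_one hc.le hc1 (sub_pos.2 hθθ')
  obtain ⟨h, hh, hh0⟩ : ∃ h : ℕ, C * 2 ^ θ' * (S.c ^ (θ' - θ)) ^ h ≤ 1 ∧ 0 < h := by
    have hlim := (tendsto_pow_atTop_nhds_zero_of_lt_one (by positivity) hgap).const_mul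
      (C * 2 ^ θ' : ℝ)
    rw [mul_zero] at hlim
    exact ((hlim.eventually (ge_mem_nhds zero_lt_one)).and (eventually_gt_atTop 0)).exists
  obtain ⟨m₀, hm₀⟩ : ∃ m₀ : ℕ, ∀ m ≥ m₀, c₃ * (S.b / S.c) ^ m ≤ S.c ^ h := by
    have hlim := (tendsto_pow_atTop_nhds_zero_of_lt_one (div_nonneg hb.le hc.le)
      ((div_lt_one hc).2 hbc)).const_mul c₃
    rw [mul_zero] at hlim
    exact eventually_atTop.1 (hlim.eventually (ge_mem_nhds (pow_pos hc h)))
  have hextend : C * (2 * S.c ^ h) ^ θ' ≤ (S.c ^ θ) ^ h := by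
    have hsplit : (S.c ^ h) ^ θ' = (S.c ^ (θ' - θ)) ^ h * (S.c ^ θ) ^ h := by
      rw [← mul_pow, ← Real.rpow_add hc, sub_add_cancel, Real.rpow_pow_comm hc.le]
    rw [Real.mul_rpow zero_le_two (by positivity), hsplit, ← mul_assoc, ← mul_assoc]
    exact mul_le_of_le_one_left (by positivity) hh
  refine exists_forall_le_mul_pow (by positivity) (fun m => Nat.cast_nonneg _) hh0
    (m₀ := m₀ + 1) fun m hm => ?_
  have hX := card_branchingPairs_add_le (h := h) hmaps htr (by omega : 0 < m)
    (X := ((N : ℝ) * S.c ^ θ) ^ h) fun A hA w => ?_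
  · rwa [← pow_mul, mul_comm h 2, pow_mul] at hX
  have hpre := hA.preimage_wordMap hc (List.ofFn w)
  rw [List.length_ofFn, mul_div_assoc, ← div_pow] at hpre
  calc (#(S.wordsMeeting h (S.wordMap (List.ofFn w) ⁻¹' A)) : ℝ)
      ≤ (N : ℝ) ^ h * (C * (c₃ * (S.b / S.c) ^ m + S.c ^ h) ^ θ') :=
        card_wordsMeeting_le hc.le hmaps hPi hμ hθ' hF h (by positivity) hpre
    _ ≤ (N : ℝ) ^ h * (C * (2 * S.c ^ h) ^ θ') := by
        gcongr
        linarith [hm₀ m (by omega)]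
    _ ≤ ((N : ℝ) * S.c ^ θ) ^ h := by
        rw [mul_pow]
        gcongr

variable (S) in
/-- The sum over all overlapping pairs of words of length `n` of `t` times the overlap width plus
one; for `t = 1 / r` it controls the pairs of strips through the vertices of a grid of mesh `r`. -/
def overlapEnergy (n : ℕ) (t : ℝ) : ℝ :=
  ∑ x ∈ S.overlapPairs n, (S.overlapWidth (List.ofFn x.1) (List.ofFn x.2) * t + 1)

lemma overlapEnergy_zero_le (hc : 0 ≤ S.c) {t : ℝ} (ht : 0 ≤ t) :
    S.overlapEnergy 0 t ≤ t + 1 := by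
  have hwidth : S.overlapWidth [] [] ≤ 1 := by
    refine Metric.diam_le_of_forall_dist_le zero_le_one ?_
    rintro _ ⟨p, hp, rfl⟩ _ ⟨q, hq, rfl⟩
    simpa only [List.length_nil, pow_zero, Real.dist_eq] using widthLE_strip hc [] p hp.1 q hq.1
  have hterm (w w' : List (Fin N)) : 0 ≤ S.overlapWidth w w' * t + 1 :=
    add_nonneg (mul_nonneg (overlapWidth_nonneg w w') ht) zero_le_one
  calc S.overlapEnergy 0 t
      ≤ ∑ x : (Fin 0 → Fin N) × (Fin 0 → Fin N),
          (S.overlapWidth (List.ofFn x.1) (List.ofFn x.2) * t + 1) :=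
        Finset.sum_le_univ_sum_of_nonneg fun x => hterm _ _
    _ = S.overlapWidth [] [] * t + 1 := by
        simp only [Fintype.sum_prod_type, Fintype.sum_unique, List.ofFn_zero]
    _ ≤ t + 1 := by
        gcongr
        exact mul_le_of_le_one_left ht hwidth

lemma sum_branchingPairs_le {c₃ : ℝ} (htr : S.IsTransversal c₃) (n : ℕ) {t : ℝ} (ht : 0 ≤ t) :
    ∑ x ∈ S.branchingPairs n, (S.overlapWidth (List.ofFn x.1) (List.ofFn x.2) * t + 1) ≤
      #(S.branchingPairs n) * (c₃ * S.b ^ n * t + 1) := by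
  rw [← nsmul_eq_mul]
  refine Finset.sum_le_card_nsmul _ _ _ fun x hx => ?_
  gcongr
  exact htr n x hx

lemma exists_cons_of_mem_overlapPairs_sdiff (hc : S.c ≠ 0) (hb : S.b ≠ 0) {n : ℕ}
    {x : (Fin (n + 1) → Fin N) × (Fin (n + 1) → Fin N)}
    (hx : x ∈ S.overlapPairs (n + 1) \ S.branchingPairs (n + 1)) :
    ∃ i, ∃ y ∈ S.overlapPairs n, (Fin.cons i y.1, Fin.cons i y.2) = x := by
  obtain ⟨hx, hbr⟩ := Finset.mem_sdiff.1 hx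
  obtain ⟨x₁, x₂⟩ := x
  obtain ⟨i, w, rfl⟩ := Fin.exists_cons x₁
  obtain ⟨i', w', rfl⟩ := Fin.exists_cons x₂
  obtain rfl : i = i' := by
    by_contra hne
    exact hbr (mem_branchingPairs.2 ⟨mem_overlapPairs.1 hx, n.succ_pos, hne⟩)
  refine ⟨i, (w, w'), ?_, rfl⟩
  rwa [mem_overlapPairs, List.ofFn_cons, List.ofFn_cons, strip_inter_strip_cons hc hb,
    image_nonempty, ← mem_overlapPairs (x := (w, w'))] at hx

lemma sum_overlapPairs_sdiff_branchingPairs_le (hc : 0 < S.c) (hb : S.b ≠ 0) (n : ℕ) {t : ℝ}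
    (ht : 0 ≤ t) :
    ∑ x ∈ S.overlapPairs (n + 1) \ S.branchingPairs (n + 1),
      (S.overlapWidth (List.ofFn x.1) (List.ofFn x.2) * t + 1) ≤
        N * S.overlapEnergy n (S.c * t) := by
  let term {n : ℕ} (t : ℝ) (x : (Fin n → Fin N) × (Fin n → Fin N)) : ℝ :=
    S.overlapWidth (List.ofFn x.1) (List.ofFn x.2) * t + 1
  let extend (y : Fin N × (Fin n → Fin N) × (Fin n → Fin N)) :
      (Fin (n + 1) → Fin N) × (Fin (n + 1) → Fin N) := (Fin.cons y.1 y.2.1, Fin.cons y.1 y.2.2)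
  have hterm (x : (Fin (n + 1) → Fin N) × (Fin (n + 1) → Fin N)) : 0 ≤ term t x :=
    add_nonneg (mul_nonneg (overlapWidth_nonneg _ _) ht) zero_le_one
  have hsub : S.overlapPairs (n + 1) \ S.branchingPairs (n + 1) ⊆
      (Finset.univ ×ˢ S.overlapPairs n).image extend := fun x hx => by
    obtain ⟨i, y, hy, rfl⟩ := exists_cons_of_mem_overlapPairs_sdiff hc.ne' hb hx
    exact Finset.mem_image.2 ⟨(i, y), by simpa using hy, rfl⟩
  calc ∑ x ∈ S.overlapPairs (n + 1) \ S.branchingPairs (n + 1), term t x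
      ≤ ∑ x ∈ (Finset.univ ×ˢ S.overlapPairs n).image extend, term t x :=
        Finset.sum_le_sum_of_subset_of_nonneg hsub fun x _ _ => hterm x
    _ ≤ ∑ y ∈ Finset.univ ×ˢ S.overlapPairs n, term t (extend y) :=
        Finset.sum_image_le_of_nonneg fun x _ => hterm x
    _ ≤ ∑ y ∈ Finset.univ ×ˢ S.overlapPairs n, term (S.c * t) y.2 := by
        refine Finset.sum_le_sum fun y _ => ?_
        simp only [term, extend, List.ofFn_cons]
        rw [mul_left_comm, ← mul_assoc]
        gcongr
        exact overlapWidth_cons_cons_le hc hb _ _ _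
    _ = N * S.overlapEnergy n (S.c * t) := by
        simp only [Finset.sum_product, Finset.sum_const, Finset.card_univ, Fintype.card_fin,
          nsmul_eq_mul, overlapEnergy, term]

lemma overlapEnergy_succ_le (hc : 0 < S.c) (hb : S.b ≠ 0) {c₃ : ℝ} (htr : S.IsTransversal c₃)
    (n : ℕ) {t : ℝ} (ht : 0 ≤ t) :
    S.overlapEnergy (n + 1) t ≤ N * S.overlapEnergy n (S.c * t) +
      #(S.branchingPairs (n + 1)) * (c₃ * S.b ^ (n + 1) * t + 1) := by
  rw [overlapEnergy, ← Finset.sum_sdiff (Finset.filter_subset _ _ :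
    S.branchingPairs (n + 1) ⊆ S.overlapPairs (n + 1))]
  exact add_le_add (sum_overlapPairs_sdiff_branchingPairs_le hc hb n ht)
    (sum_branchingPairs_le htr (n + 1) ht)

lemma overlapEnergy_le (hb : 0 < S.b) (hbc : S.b < S.c) {c₃ : ℝ} (hc₃ : 0 ≤ c₃)
    (htr : S.IsTransversal c₃) {K Q M : ℝ} (hQ : 0 ≤ Q)
    (hK : ∀ m, (#(S.branchingPairs m) : ℝ) ≤ K * Q ^ m) (hQM : Q ≤ M) (hNM : N * S.c / S.b ≤ M)
    (n : ℕ) {τ : ℝ} (hτ : 1 ≤ τ) :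
    S.overlapEnergy n (τ / S.b ^ n) ≤ (n * (K * (c₃ + 1)) + 2) * M ^ n * τ := by
  have hK0 : 0 ≤ K := by simpa using (Nat.cast_nonneg _).trans (hK 0)
  have hc := hb.trans hbc
  induction n generalizing τ with
  | zero =>
    have := overlapEnergy_zero_le hc.le (zero_le_one.trans hτ)
    simp only [pow_zero, div_one, Nat.cast_zero, zero_mul, zero_add, mul_one]
    linarith
  | succ n ih =>
    have hM : 0 ≤ M := hQ.trans hQM
    have hτ' : 1 ≤ S.c / S.b * τ :=
      one_le_mul_of_one_le_of_one_le ((one_le_div hb).2 hbc.le) hτ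
    have hbranch : c₃ * S.b ^ (n + 1) * (τ / S.b ^ (n + 1)) + 1 ≤ (c₃ + 1) * τ := by
      rw [mul_assoc, mul_div_cancel₀ _ (pow_pos hb _).ne']
      linarith
    have hscale : S.c * (τ / S.b ^ (n + 1)) = S.c / S.b * τ / S.b ^ n := by
      rw [pow_succ]
      field_simp
    calc S.overlapEnergy (n + 1) (τ / S.b ^ (n + 1))
        ≤ N * S.overlapEnergy n (S.c / S.b * τ / S.b ^ n) +
            #(S.branchingPairs (n + 1)) * ((c₃ + 1) * τ) := by
          refine (overlapEnergy_succ_le hc hb.ne' htr n (by positivity)).trans ?_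
          rw [hscale]
          gcongr
      _ ≤ N * ((n * (K * (c₃ + 1)) + 2) * M ^ n * (S.c / S.b * τ)) +
            K * M ^ (n + 1) * ((c₃ + 1) * τ) := by
          gcongr
          · exact ih hτ'
          · exact (hK (n + 1)).trans (by gcongr)
      _ = (n * (K * (c₃ + 1)) + 2) * M ^ n * τ * (N * S.c / S.b) +
            K * (c₃ + 1) * M ^ (n + 1) * τ := by ring
      _ ≤ (n * (K * (c₃ + 1)) + 2) * M ^ n * τ * M + K * (c₃ + 1) * M ^ (n + 1) * τ := by
          gcongr
      _ = ((n + 1 : ℕ) * (K * (c₃ + 1)) + 2) * M ^ (n + 1) * τ := by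
          push_cast
          ring

end TriangularIFS

/-! ### The mesh sums of the self-affine measure -/

namespace TriangularIFS

open scoped Finset

variable {N : ℕ} {S : TriangularIFS N} {Pi : (ℕ → Fin N) → ℝ × ℝ} {μ : Measure (ℕ → Fin N)}

lemma card_le_of_latticePoint_mem (hc : 0 < S.c) (hb : 0 < S.b) {w w' : List (Fin N)} {r : ℝ}
    (hr : S.b ^ (w.length + 1) < r) {T : Finset (ℤ × ℤ)}
    (hT : ∀ p ∈ T, latticePoint r p ∈ S.strip w ∩ S.strip w') :
    (#T : ℝ) ≤ (S.overlapWidth w w' * (1 / r) + 1) * (1 / S.b + 1) := by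
  have hr0 : 0 < r := (pow_pos hb _).trans hr
  refine card_le_of_forall_sub_le_prod (mul_nonneg (overlapWidth_nonneg w w') (by positivity))
    (by positivity) (fun p hp q hq => ?_) fun p hp q hq hpq => ?_
  · rw [mul_one_div, le_div_iff₀ hr0, sub_mul]
    exact (le_abs_self _).trans (widthLE_strip_inter_strip w w' _ (hT p hp) _ (hT q hq))
  · have hfst : (latticePoint r p).1 = (latticePoint r q).1 :=
      congrArg (fun k : ℤ => (k : ℝ) * r) hpq
    have hsnd := (le_abs_self _).trans (abs_snd_sub_le hc hb (hT p hp).1 (hT q hq).1 hfst)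
    simp only [latticePoint, ← sub_mul] at hsnd
    rw [pow_succ] at hr
    rw [le_div_iff₀ hb]
    refine le_of_mul_le_mul_right ?_ hr0
    calc ((p.2 : ℝ) - q.2) * S.b * r = ((p.2 : ℝ) - q.2) * r * S.b := by ring
      _ ≤ S.b ^ w.length * S.b := by gcongr
      _ ≤ 1 * r := by linarith

open Classical in
lemma sq_card_wordsMeeting_singleton (n : ℕ) (z : ℝ × ℝ) :
    #(S.wordsMeeting n {z}) ^ 2 =
      #{x ∈ S.overlapPairs n | z ∈ S.strip (List.ofFn x.1) ∩ S.strip (List.ofFn x.2)} := by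
  rw [sq, ← Finset.card_product]
  congr 1
  ext x
  simp only [Finset.mem_product, mem_wordsMeeting_singleton, Finset.mem_filter, mem_overlapPairs]
  exact ⟨fun h => ⟨⟨z, h⟩, h⟩, And.right⟩

lemma sum_sq_card_wordsMeeting_latticePoint_le (hc : 0 < S.c) (hb : 0 < S.b) {n : ℕ} {r : ℝ}
    (hr : S.b ^ (n + 1) < r) (T : Finset (ℤ × ℤ)) :
    ∑ p ∈ T, (#(S.wordsMeeting n {latticePoint r p}) : ℝ) ^ 2 ≤
      S.overlapEnergy n (1 / r) * (1 / S.b + 1) := by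
  classical
  let overlap (x : (Fin n → Fin N) × (Fin n → Fin N)) : Set (ℝ × ℝ) :=
    S.strip (List.ofFn x.1) ∩ S.strip (List.ofFn x.2)
  calc ∑ p ∈ T, (#(S.wordsMeeting n {latticePoint r p}) : ℝ) ^ 2
      = ∑ p ∈ T, (#{x ∈ S.overlapPairs n | latticePoint r p ∈ overlap x} : ℝ) :=
        Finset.sum_congr rfl fun p _ => by exact_mod_cast sq_card_wordsMeeting_singleton n _
    _ = ∑ x ∈ S.overlapPairs n, (#{p ∈ T | latticePoint r p ∈ overlap x} : ℝ) := by
        exact_mod_cast Finset.sum_card_bipartiteAbove_eq_sum_card_bipartiteBelow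
          (fun p x => latticePoint r p ∈ overlap x)
    _ ≤ S.overlapEnergy n (1 / r) * (1 / S.b + 1) := by
        rw [overlapEnergy, Finset.sum_mul]
        refine Finset.sum_le_sum fun x _ => card_le_of_latticePoint_mem hc hb ?_ fun p hp => ?_
        · rwa [List.length_ofFn]
        · exact (Finset.mem_filter.1 hp).2

lemma card_wordsMeeting_meshCell_le (hb : 0 < S.b) (hb1 : S.b < 1) (hbc : S.b < S.c) {n : ℕ}
    {r : ℝ} (hr' : S.b ^ (n + 1) < r) (hr : r ≤ S.b ^ n) (p : ℤ × ℤ) :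
    #(S.wordsMeeting n (meshCell r p)) ≤
      ∑ f ∈ S.offsets, #(S.wordsMeeting n {latticePoint r (p + f)}) := by
  classical
  refine (Finset.card_le_card fun w hw => ?_).trans Finset.card_biUnion_le
  obtain ⟨f, hf, hfw⟩ := exists_offset_latticePoint_mem_strip hb hb1 hbc
    (by rwa [List.length_ofFn]) (by rwa [List.length_ofFn]) (mem_wordsMeeting.1 hw)
  exact Finset.mem_biUnion.2 ⟨f, hf, mem_wordsMeeting_singleton.2 hfw⟩

lemma sum_sq_card_wordsMeeting_meshCell_le (hb : 0 < S.b) (hb1 : S.b < 1) (hbc : S.b < S.c)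
    {n : ℕ} {r : ℝ} (hr' : S.b ^ (n + 1) < r) (hr : r ≤ S.b ^ n) (T : Finset (ℤ × ℤ)) :
    ∑ p ∈ T, (#(S.wordsMeeting n (meshCell r p)) : ℝ) ^ 2 ≤
      (#S.offsets : ℝ) ^ 2 * (S.overlapEnergy n (1 / r) * (1 / S.b + 1)) := by
  have hcell (p : ℤ × ℤ) : (#(S.wordsMeeting n (meshCell r p)) : ℝ) ≤
      ∑ f ∈ S.offsets, (#(S.wordsMeeting n {latticePoint r (p + f)}) : ℝ) := by
    exact_mod_cast card_wordsMeeting_meshCell_le hb hb1 hbc hr' hr p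
  have hshift (f : ℤ × ℤ) : ∑ p ∈ T, (#(S.wordsMeeting n {latticePoint r (p + f)}) : ℝ) ^ 2 ≤
      S.overlapEnergy n (1 / r) * (1 / S.b + 1) := by
    simpa only [Finset.sum_map, addRightEmbedding_apply] using
      sum_sq_card_wordsMeeting_latticePoint_le (hb.trans hbc) hb hr' (T.map (addRightEmbedding f))
  calc ∑ p ∈ T, (#(S.wordsMeeting n (meshCell r p)) : ℝ) ^ 2
      ≤ ∑ p ∈ T, #S.offsets *
          ∑ f ∈ S.offsets, (#(S.wordsMeeting n {latticePoint r (p + f)}) : ℝ) ^ 2 := by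
        refine Finset.sum_le_sum fun p _ => ?_
        exact (pow_le_pow_left₀ (Nat.cast_nonneg _) (hcell p) 2).trans sq_sum_le_card_mul_sum_sq
    _ = #S.offsets *
          ∑ f ∈ S.offsets, ∑ p ∈ T, (#(S.wordsMeeting n {latticePoint r (p + f)}) : ℝ) ^ 2 := by
        rw [← Finset.mul_sum, Finset.sum_comm]
    _ ≤ #S.offsets * ∑ _f ∈ S.offsets, S.overlapEnergy n (1 / r) * (1 / S.b + 1) := by
        gcongr with f
        exact hshift f
    _ = (#S.offsets : ℝ) ^ 2 * (S.overlapEnergy n (1 / r) * (1 / S.b + 1)) := by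
        rw [Finset.sum_const, nsmul_eq_mul, ← mul_assoc, sq]

end TriangularIFS

lemma measurableSet_meshCell (r : ℝ) (k : ℤ × ℤ) : MeasurableSet (meshCell r k) :=
  measurableSet_Ico.prod measurableSet_Ico

lemma meshSum_le_ofReal {m : Measure (ℝ × ℝ)} [IsFiniteMeasure m] {r B : ℝ}
    (h : ∀ T : Finset (ℤ × ℤ), ∑ p ∈ T, m.real (meshCell r p) ^ 2 ≤ B) :
    meshSum m r ≤ ENNReal.ofReal B := by
  rw [meshSum, ENNReal.tsum_eq_iSup_sum]
  refine iSup_le fun T => (ENNReal.ofReal_le_ofReal (h T)).trans' (le_of_eq ?_)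
  rw [ENNReal.ofReal_sum_of_nonneg fun p _ => sq_nonneg _]
  exact Finset.sum_congr rfl fun p _ => by
    rw [ENNReal.ofReal_pow measureReal_nonneg, ofReal_measureReal, meshCell]

namespace TriangularIFS

open scoped Finset

variable {N : ℕ} {S : TriangularIFS N} {Pi : (ℕ → Fin N) → ℝ × ℝ} {μ : Measure (ℕ → Fin N)}

lemma widthLE_meshCell (r : ℝ) (k : ℤ × ℤ) : WidthLE (meshCell r k) r := by
  rintro p ⟨hp, -⟩ q ⟨hq, -⟩
  rw [abs_le]
  constructor <;> linarith [hp.1, hp.2, hq.1, hq.2]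

variable (S) in
/-- The exponential rate at which the mesh sums of the self-affine measure decay along the mesh
sizes `b ^ n` when the projected measure is Frostman with exponent `θ`. -/
def decay (θ : ℝ) : ℝ :=
  ((S.b / S.c) ^ θ / N) ^ 2 * max (((N : ℝ) * S.c ^ θ) ^ 2) (N * S.c / S.b)

lemma decay_nonneg (θ : ℝ) : 0 ≤ S.decay θ :=
  mul_nonneg (sq_nonneg _) ((sq_nonneg _).trans (le_max_left _ _))

lemma exists_overlapEnergy_le (hb : 0 < S.b) (hbc : S.b < S.c) (hc1 : S.c < 1)
    (hmaps : S.MapsUnitSq) (hPi : S.IsCodingMap Pi) (hμ : IsUniformBernoulli N μ)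
    (htr : Transversality N S.c S.b S.u S.v S.d) {C : NNReal} {θ θ' : ℝ} (hθ' : 0 ≤ θ')
    (hθθ' : θ < θ') (hF : IsFrostman ((μ.map Pi).map Prod.fst) C θ') :
    ∃ K, ∀ (n : ℕ) (r : ℝ), S.b ^ (n + 1) < r → r ≤ S.b ^ n → S.overlapEnergy n (1 / r) ≤
      K * ((n + 1) * max (((N : ℝ) * S.c ^ θ) ^ 2) (N * S.c / S.b) ^ n) := by
  obtain ⟨c₃, hc₃, htr⟩ := htr.exists_isTransversal
  obtain ⟨K, hK⟩ := exists_card_branchingPairs_le hb hbc hc1 hmaps hPi hμ hc₃ htr hθ' hθθ' hF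
  have hK0 : 0 ≤ K := by simpa using (Nat.cast_nonneg _).trans (hK 0)
  refine ⟨(K * (c₃ + 1) + 2) / S.b, fun n r hr' hr => ?_⟩
  have hr0 : 0 < r := (pow_pos hb _).trans hr'
  have hτ : S.b ^ n / r ≤ 1 / S.b := by
    rw [div_le_div_iff₀ hr0 hb, ← pow_succ]
    linarith
  have henergy := overlapEnergy_le hb hbc hc₃ htr (sq_nonneg _) hK (le_max_left _ (N * S.c / S.b))
    (le_max_right _ _) n ((one_le_div hr0).2 hr)
  rw [div_right_comm, div_self (pow_pos hb n).ne'] at henergy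
  set M := max (((N : ℝ) * S.c ^ θ) ^ 2) (N * S.c / S.b)
  have : 0 ≤ M := (sq_nonneg _).trans (le_max_left _ _)
  have hKc : 0 ≤ K * (c₃ + 1) := by positivity
  calc S.overlapEnergy n (1 / r) ≤ (n * (K * (c₃ + 1)) + 2) * M ^ n * (S.b ^ n / r) := henergy
    _ ≤ (n + 1) * (K * (c₃ + 1) + 2) * M ^ n * (1 / S.b) := by
        gcongr
        linarith [(Nat.cast_nonneg n : (0 : ℝ) ≤ n)]
    _ = (K * (c₃ + 1) + 2) / S.b * ((n + 1) * M ^ n) := by ring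

lemma measureReal_meshCell_le (hb : 0 < S.b) (hbc : S.b < S.c) (hc1 : S.c < 1)
    (hmaps : S.MapsUnitSq) (hPi : S.IsCodingMap Pi) (hμ : IsUniformBernoulli N μ) {C : NNReal}
    {θ θ' : ℝ} (hθ' : 0 ≤ θ') (hθθ' : θ ≤ θ') (hF : IsFrostman ((μ.map Pi).map Prod.fst) C θ')
    {n : ℕ} {r : ℝ} (hr0 : 0 < r) (hr : r ≤ S.b ^ n) (p : ℤ × ℤ) :
    (μ.map Pi).real (meshCell r p) ≤
      #(S.wordsMeeting n (meshCell r p)) * (C * 2 ^ θ' * ((S.b / S.c) ^ θ / N) ^ n) := by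
  have hc := hb.trans hbc
  have hbc1 : S.b / S.c ≤ 1 := (div_le_one hc).2 hbc.le
  have hwidth : (2 * (r / S.c ^ n)) ^ θ' ≤ 2 ^ θ' * ((S.b / S.c) ^ θ) ^ n := by
    calc (2 * (r / S.c ^ n)) ^ θ' ≤ (2 * (S.b / S.c) ^ n) ^ θ' := by
          rw [div_pow]
          gcongr
      _ = 2 ^ θ' * ((S.b / S.c) ^ θ') ^ n := by
          rw [Real.mul_rpow zero_le_two (by positivity), Real.rpow_pow_comm (by positivity)]
      _ ≤ 2 ^ θ' * ((S.b / S.c) ^ θ) ^ n := by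
          gcongr ?_ * ?_ ^ n
          exact Real.rpow_le_rpow_of_exponent_ge (by positivity) hbc1 hθθ'
  calc (μ.map Pi).real (meshCell r p)
      ≤ #(S.wordsMeeting n (meshCell r p)) * (C * (2 * (r / S.c ^ n)) ^ θ' / (N : ℝ) ^ n) :=
        measureReal_map_le_of_widthLE hc hc1 hmaps hPi hμ hθ' hF n (measurableSet_meshCell r p)
          hr0 (widthLE_meshCell r p)
    _ ≤ #(S.wordsMeeting n (meshCell r p)) *
          (C * (2 ^ θ' * ((S.b / S.c) ^ θ) ^ n) / (N : ℝ) ^ n) := by gcongr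
    _ = #(S.wordsMeeting n (meshCell r p)) * (C * 2 ^ θ' * ((S.b / S.c) ^ θ / N) ^ n) := by ring

lemma exists_meshSum_le (hb : 0 < S.b) (hbc : S.b < S.c) (hc1 : S.c < 1)
    (hmaps : S.MapsUnitSq) (hPi : S.IsCodingMap Pi) (hμ : IsUniformBernoulli N μ)
    (htr : Transversality N S.c S.b S.u S.v S.d) {C : NNReal} {θ θ' : ℝ} (hθ' : 0 ≤ θ')
    (hθθ' : θ < θ') (hF : IsFrostman ((μ.map Pi).map Prod.fst) C θ') :
    ∃ K, ∀ (n : ℕ) (r : ℝ), S.b ^ (n + 1) < r → r ≤ S.b ^ n →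
      meshSum (μ.map Pi) r ≤ ENNReal.ofReal (K * ((n + 1) * S.decay θ ^ n)) := by
  have := hμ.1
  obtain ⟨K, hK⟩ := exists_overlapEnergy_le hb hbc hc1 hmaps hPi hμ htr hθ' hθθ' hF
  refine ⟨(C * 2 ^ θ') ^ 2 * ((#S.offsets : ℝ) ^ 2 * (K * (1 / S.b + 1))),
    fun n r hr' hr => meshSum_le_ofReal fun T => ?_⟩
  set κ := C * 2 ^ θ' * ((S.b / S.c) ^ θ / N) ^ n with hκ
  set M := max (((N : ℝ) * S.c ^ θ) ^ 2) (N * S.c / S.b) with hM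
  calc ∑ p ∈ T, (μ.map Pi).real (meshCell r p) ^ 2
      ≤ ∑ p ∈ T, (#(S.wordsMeeting n (meshCell r p)) * κ) ^ 2 := by
        gcongr with p
        exact measureReal_meshCell_le hb hbc hc1 hmaps hPi hμ hθ' hθθ'.le hF
          ((pow_pos hb _).trans hr') hr p
    _ = (∑ p ∈ T, (#(S.wordsMeeting n (meshCell r p)) : ℝ) ^ 2) * κ ^ 2 := by
        simp only [mul_pow, Finset.sum_mul]
    _ ≤ (#S.offsets : ℝ) ^ 2 * (K * ((n + 1) * M ^ n) * (1 / S.b + 1)) * κ ^ 2 := by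
        gcongr
        refine (sum_sq_card_wordsMeeting_meshCell_le hb (hbc.trans hc1) hbc hr' hr T).trans ?_
        gcongr
        exact hK n r hr' hr
    _ = _ := by
        rw [decay, ← hM, hκ, mul_pow, mul_pow _ M, ← pow_mul, ← pow_mul, mul_comm n]
        ring

lemma decay_one (hb : 0 < S.b) (hb1 : S.b < 1) (hc : 0 < S.c) (hN : (0 : ℝ) < N) :
    S.decay 1 = S.b ^ min 2 (1 + Real.log (N * S.c) / -Real.log S.b) := by
  have hlog : Real.log S.b ≠ 0 := (Real.log_neg hb hb1).ne
  have hpow : S.b ^ (Real.log (N * S.c) / -Real.log S.b) = (N * S.c)⁻¹ := by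
    rw [Real.rpow_def_of_pos hb, mul_div_assoc', mul_comm, div_neg, mul_div_cancel_right₀ _ hlog,
      Real.exp_neg, Real.exp_log (by positivity)]
  rw [(Real.antitone_rpow_of_base_le_one hb hb1.le).map_min, Real.rpow_two, Real.rpow_add hb,
    Real.rpow_one, hpow, decay, mul_max_of_nonneg _ _ (sq_nonneg _)]
  simp only [Real.rpow_one]
  congr 1 <;> field_simp

lemma continuous_decay (hb : S.b ≠ 0) (hc : S.c ≠ 0) : Continuous S.decay := by
  have hrpow {x : ℝ} (hx : x ≠ 0) : Continuous fun θ : ℝ => x ^ θ :=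
    Real.continuous_const_rpow hx
  exact (((hrpow (div_ne_zero hb hc)).div_const _).pow 2).mul
    (((hrpow hc).const_mul _).pow 2 |>.max continuous_const)

lemma exists_decay_lt (hb : 0 < S.b) (hb1 : S.b < 1) (hc : 0 < S.c) (hN : (0 : ℝ) < N) {a : ℝ}
    (ha : a < min 2 (1 + Real.log (N * S.c) / -Real.log S.b)) :
    ∃ θ ∈ Ioo 0 1, S.decay θ < S.b ^ a := by
  have hlt : S.decay 1 < S.b ^ a := by
    rw [decay_one hb hb1 hc hN]
    exact Real.rpow_lt_rpow_of_exponent_gt hb hb1 ha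
  have hnear : ∀ᶠ θ in 𝓝[<] 1, S.decay θ < S.b ^ a :=
    (((continuous_decay hb.ne' hc.ne').tendsto 1).eventually_lt_const hlt).filter_mono
      nhdsWithin_le_nhds
  exact (hnear.and (Ioo_mem_nhdsLT zero_lt_one)).exists.imp fun θ h => h.symm

end TriangularIFS

/-! ### Correlation dimension -/

section CorrelationDimension

open scoped Finset

lemma eventually_mul_succ_mul_pow_le {Y Z ε : ℝ} (hY : 0 ≤ Y) (hYZ : Y < Z) (hε : 0 < ε) (K : ℝ) :
    ∀ᶠ n : ℕ in atTop, K * ((n + 1) * Y ^ n) ≤ ε * Z ^ n := by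
  have hZ : 0 < Z := hY.trans_lt hYZ
  have hq : Y / Z < 1 := (div_lt_one hZ).2 hYZ
  have hlim := ((tendsto_self_mul_const_pow_of_lt_one (by positivity) hq).add
    (tendsto_pow_atTop_nhds_zero_of_lt_one (by positivity) hq)).const_mul K
  rw [add_zero, mul_zero] at hlim
  filter_upwards [hlim.eventually_le_const hε] with n hn
  calc K * ((n + 1) * Y ^ n) = K * (n * (Y / Z) ^ n + (Y / Z) ^ n) * Z ^ n := by
        rw [div_pow]
        field_simp
    _ ≤ ε * Z ^ n := by gcongr

lemma min_one_rpow_mul_pow_le_rpow {b r : ℝ} (hb : 0 < b) (a : ℝ) {n : ℕ}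
    (hr' : b ^ (n + 1) ≤ r) (hr : r ≤ b ^ n) : min 1 (b ^ a) * (b ^ a) ^ n ≤ r ^ a := by
  have hr0 : 0 < r := (pow_pos hb _).trans_le hr'
  have hn : (b ^ a) ^ n = (b ^ n) ^ a := Real.rpow_pow_comm hb.le a n
  obtain ha | ha := le_total 0 a
  · calc min 1 (b ^ a) * (b ^ a) ^ n ≤ b ^ a * (b ^ a) ^ n := by
          gcongr
          exact min_le_right _ _
      _ = (b ^ (n + 1)) ^ a := by rw [← pow_succ', Real.rpow_pow_comm hb.le]
      _ ≤ r ^ a := by gcongr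
  · calc min 1 (b ^ a) * (b ^ a) ^ n ≤ 1 * (b ^ a) ^ n := by
          gcongr
          exact min_le_left _ _
      _ ≤ r ^ a := by
          rw [one_mul, hn]
          exact Real.rpow_le_rpow_of_nonpos hr0 hr ha

lemma eventually_le_ofReal_rpow {b : ℝ} (hb : 0 < b) (hb1 : b < 1) {F : ℝ → ℝ≥0∞} {K Y a : ℝ}
    (hY : 0 ≤ Y) (hYa : Y < b ^ a)
    (hF : ∀ (n : ℕ) (r : ℝ), b ^ (n + 1) < r → r ≤ b ^ n →
      F r ≤ ENNReal.ofReal (K * ((n + 1) * Y ^ n))) :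
    ∀ᶠ r in 𝓝[>] 0, F r ≤ ENNReal.ofReal (r ^ a) := by
  obtain ⟨n₀, hn₀⟩ := eventually_atTop.1 (eventually_mul_succ_mul_pow_le hY hYa
    (lt_min zero_lt_one (Real.rpow_pos_of_pos hb a)) K)
  filter_upwards [Ioo_mem_nhdsGT (pow_pos hb (n₀ + 1))] with r hr
  obtain ⟨n, hr', hrn⟩ := exists_nat_pow_near_of_lt_one hr.1
    (hr.2.le.trans (pow_le_one₀ hb.le hb1.le)) hb hb1
  have hn : n₀ ≤ n := by
    have := (pow_lt_pow_iff_right_of_lt_one₀ hb hb1).1 (hr'.trans hr.2)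
    omega
  exact (hF n r hr' hrn).trans (ENNReal.ofReal_le_ofReal
    ((hn₀ n hn).trans (min_one_rpow_mul_pow_le_rpow hb a hr'.le hrn)))

lemma unitSq_subset_biUnion_meshCell {r : ℝ} (hr : 0 < r) :
    unitSq ⊆ ⋃ p ∈ Finset.Icc (0 : ℤ) ⌊1 / r⌋ ×ˢ Finset.Icc (0 : ℤ) ⌊1 / r⌋, meshCell r p := by
  have hfloor {x : ℝ} (hx : x ∈ Icc (0 : ℝ) 1) : ⌊x / r⌋ ∈ Finset.Icc (0 : ℤ) ⌊1 / r⌋ :=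
    Finset.mem_Icc.2 ⟨Int.floor_nonneg.2 (div_nonneg hx.1 hr.le),
      Int.floor_le_floor (div_le_div_of_nonneg_right hx.2 hr.le)⟩
  have hcell (x : ℝ) : x ∈ Ico ((⌊x / r⌋ : ℝ) * r) ((⌊x / r⌋ + 1 : ℝ) * r) :=
    ⟨(le_div_iff₀ hr).1 (Int.floor_le _), (div_lt_iff₀ hr).1 (Int.lt_floor_add_one _)⟩
  rintro ⟨x, y⟩ ⟨hx, hy⟩
  exact mem_iUnion₂.2 ⟨(⌊x / r⌋, ⌊y / r⌋), Finset.mem_product.2 ⟨hfloor hx, hfloor hy⟩,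
    hcell x, hcell y⟩

lemma one_le_card_mul_toReal_meshSum {m : Measure (ℝ × ℝ)} [IsProbabilityMeasure m]
    {A : Set (ℝ × ℝ)} (hA : m A = 1) {r : ℝ} (hfin : meshSum m r ≠ ⊤) {T : Finset (ℤ × ℤ)}
    (hT : A ⊆ ⋃ p ∈ T, meshCell r p) : 1 ≤ #T * (meshSum m r).toReal := by
  have hcover : 1 ≤ ∑ p ∈ T, m.real (meshCell r p) := by
    have hA : m.real A = 1 := by rw [Measure.real, hA, ENNReal.toReal_one]
    exact hA ▸ (measureReal_mono hT (measure_ne_top m _)).trans (measureReal_biUnion_finset_le T _)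
  have hsum : ∑ p ∈ T, m.real (meshCell r p) ^ 2 ≤ (meshSum m r).toReal := by
    simp only [Measure.real, ← ENNReal.toReal_pow]
    rw [← ENNReal.toReal_sum fun p _ => ENNReal.pow_ne_top (measure_ne_top m _)]
    exact ENNReal.toReal_mono hfin (ENNReal.sum_le_tsum T)
  calc (1 : ℝ) ≤ (∑ p ∈ T, m.real (meshCell r p)) ^ 2 := one_le_pow₀ hcover
    _ ≤ #T * ∑ p ∈ T, m.real (meshCell r p) ^ 2 := sq_sum_le_card_mul_sum_sq
    _ ≤ #T * (meshSum m r).toReal := by gcongr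

lemma pow_three_le_toReal_meshSum {m : Measure (ℝ × ℝ)} [IsProbabilityMeasure m]
    (hm : m unitSq = 1) {r : ℝ} (hr : 0 < r) (hr4 : r ≤ 1 / 4) (hfin : meshSum m r ≠ ⊤) :
    r ^ 3 ≤ (meshSum m r).toReal := by
  have hcard : (#(Finset.Icc (0 : ℤ) ⌊1 / r⌋) : ℝ) ≤ 2 / r := by
    have hfloor : ((⌊1 / r⌋ + 1 : ℤ) : ℝ) ≤ 1 / r + 1 := by
      push_cast
      gcongr
      exact Int.floor_le _
    have hpos : 0 ≤ ⌊1 / r⌋ := Int.floor_nonneg.2 (by positivity)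
    rw [Int.card_Icc, sub_zero, ← Int.cast_natCast, Int.toNat_of_nonneg (by omega)]
    calc ((⌊1 / r⌋ + 1 : ℤ) : ℝ) ≤ 1 / r + 1 := hfloor
      _ ≤ 1 / r + 1 / r := by
        gcongr
        rw [one_le_div hr]
        linarith
      _ = 2 / r := by ring
  have hone := one_le_card_mul_toReal_meshSum hm hfin (unitSq_subset_biUnion_meshCell hr)
  rw [Finset.card_product, Nat.cast_mul] at hone
  have hone : 1 ≤ 2 / r * (2 / r) * (meshSum m r).toReal := hone.trans (by gcongr)
  calc r ^ 3 ≤ r ^ 2 / 4 * 1 := by nlinarith [sq_nonneg r]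
    _ ≤ r ^ 2 / 4 * (2 / r * (2 / r) * (meshSum m r).toReal) := by gcongr
    _ = (meshSum m r).toReal := by
      field_simp
      ring

lemma log_meshSum_div_log_mem_Icc {m : Measure (ℝ × ℝ)} [IsProbabilityMeasure m]
    (hm : m unitSq = 1) {r a : ℝ} (hr : 0 < r) (hr4 : r ≤ 1 / 4)
    (h : meshSum m r ≤ ENNReal.ofReal (r ^ a)) :
    Real.log (meshSum m r).toReal / Real.log r ∈ Icc a 3 := by
  have hlog : Real.log r < 0 := Real.log_neg hr (by linarith)
  have hlower := pow_three_le_toReal_meshSum hm hr hr4 (ne_top_of_le_ne_top ENNReal.ofReal_ne_top h)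
  have hupper := ENNReal.toReal_le_of_le_ofReal (by positivity) h
  refine ⟨?_, ?_⟩
  · rw [le_div_iff_of_neg hlog, ← Real.log_rpow hr]
    exact Real.log_le_log ((pow_pos hr 3).trans_le hlower) hupper
  · rw [div_le_iff_of_neg hlog]
    exact_mod_cast (Real.log_pow r 3).symm.trans_le (Real.log_le_log (pow_pos hr 3) hlower)

lemma le_liminf_log_meshSum_div_log {m : Measure (ℝ × ℝ)} [IsProbabilityMeasure m]
    (hm : m unitSq = 1) {s : ℝ}
    (h : ∀ a < s, ∀ᶠ r in 𝓝[>] 0, meshSum m r ≤ ENNReal.ofReal (r ^ a)) :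
    s ≤ liminf (fun r => Real.log (meshSum m r).toReal / Real.log r) (𝓝[>] 0) := by
  have hmem (a : ℝ) (ha : a < s) :
      ∀ᶠ r in 𝓝[>] 0, Real.log (meshSum m r).toReal / Real.log r ∈ Icc a 3 := by
    filter_upwards [h a ha, Ioo_mem_nhdsGT (by norm_num : (0 : ℝ) < 1 / 4)] with r hra hr
    exact log_meshSum_div_log_mem_Icc hm hr.1 hr.2.le hra
  have hcobdd : IsCoboundedUnder (· ≥ ·) (𝓝[>] 0)
      fun r => Real.log (meshSum m r).toReal / Real.log r :=
    IsBoundedUnder.isCoboundedUnder_ge ⟨3, eventually_map.2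
      ((hmem (s - 1) (sub_one_lt s)).mono fun _ hr => hr.2)⟩
  exact le_of_forall_lt_imp_le_of_dense fun a ha =>
    le_liminf_of_le hcobdd ((hmem a ha).mono fun _ hr => hr.1)

end CorrelationDimension

lemma TriangularIFS.IsCodingMap.map_unitSq {N : ℕ} {S : TriangularIFS N}
    {Pi : (ℕ → Fin N) → ℝ × ℝ} (hPi : S.IsCodingMap Pi) (hmaps : S.MapsUnitSq)
    (μ : Measure (ℕ → Fin N)) [IsProbabilityMeasure μ] : μ.map Pi unitSq = 1 := by
  have hpre : Pi ⁻¹' unitSq = univ :=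
    eq_univ_of_forall fun i => strip_subset_unitSq hmaps [] (hPi.mem_strip hmaps i 0)
  have hmeas : MeasurableSet unitSq := measurableSet_Icc.prod measurableSet_Icc
  rw [Measure.map_apply hPi.measurable hmeas, hpre, measure_univ]

theorem statement12_general {N : ℕ} {S : TriangularIFS N} (hb : 0 < S.b) (hbc : S.b < S.c)
    (hc1 : S.c < 1) (hmaps : S.MapsUnitSq) {Pi : (ℕ → Fin N) → ℝ × ℝ} (hPi : S.IsCodingMap Pi)
    {μ : Measure (ℕ → Fin N)} (hμ : IsUniformBernoulli N μ)
    (hF : ∀ θ ∈ Ioo (0 : ℝ) 1, ∃ C : NNReal, IsFrostman ((μ.map Pi).map Prod.fst) C θ)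
    (htr : Transversality N S.c S.b S.u S.v S.d) :
    min 2 (1 + Real.log ((N : ℝ) * S.c) / (-Real.log S.b)) ≤
      liminf (fun r : ℝ => Real.log (meshSum (μ.map Pi) r).toReal / Real.log r) (𝓝[>] 0) := by
  have := hμ.1
  have := Measure.isProbabilityMeasure_map (μ := μ) hPi.measurable.aemeasurable
  have hb1 := hbc.trans hc1
  refine le_liminf_log_meshSum_div_log (hPi.map_unitSq hmaps μ) fun a ha => ?_
  obtain ⟨θ, hθ, hdecay⟩ :=
    TriangularIFS.exists_decay_lt hb hb1 (hb.trans hbc) hμ.natCast_pos ha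
  obtain ⟨θ', hθθ', hθ'1⟩ := exists_between hθ.2
  have hθ' := hθ.1.trans hθθ'
  obtain ⟨C, hC⟩ := hF θ' ⟨hθ', hθ'1⟩
  obtain ⟨K, hK⟩ :=
    TriangularIFS.exists_meshSum_le hb hbc hc1 hmaps hPi hμ htr hθ'.le hθθ' hC
  exact eventually_le_ofReal_rpow hb hb1 (TriangularIFS.decay_nonneg θ) hdecay hK

/-- under Assumption B, the correlation (`L²`) dimension of `ν` is at least
`min(2, 1 + log(Nc)/(-log b))`. -/
theorem statement12 (N : ℕ) (hN : 2 ≤ N) (b c : ℝ)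
    (hb0 : 0 < b) (hb1 : b < 1) (hc0 : 0 < c) (hc1 : c < 1)
    (u v d : Fin N → ℝ)
    (hmaps : ∀ i, Smap c b u v d i '' unitSq ⊆ unitSq)
    (Pi : (ℕ → Fin N) → ℝ × ℝ)
    (hPi : ∀ i, Tendsto (fun n => Sword c b u v d (prefixWord i n) 0) atTop (nhds (Pi i)))
    (μ : Measure (ℕ → Fin N)) (hμ : IsUniformBernoulli N μ)
    (ν : Measure (ℝ × ℝ)) (hν : ν = μ.map Pi)
    (νx : Measure ℝ) (hνx : νx = ν.map Prod.fst)
    (hB1 : 1 / (N : ℝ) < c) (hB2 : b < c)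
    (hB3 : ∀ q > (1 : ℝ), HasLqDensity νx q)
    (hB4 : Transversality N c b u v d) :
    min 2 (1 + Real.log ((N : ℝ) * c) / (-Real.log b)) ≤
      liminf (fun r : ℝ => Real.log (meshSum ν r).toReal / Real.log r) (nhdsWithin 0 (Set.Ioi 0)) := by
  subst hν hνx
  refine statement12_general (S := ⟨c, b, u, v, d⟩) hb0 hB2 hc1 hmaps hPi hμ (fun θ hθ => ?_) hB4
  have hq : 1 < 1 / (1 - θ) := (one_lt_div (sub_pos.2 hθ.2)).2 (sub_lt_self 1 hθ.1)
  simpa only [one_div_one_div, sub_sub_cancel] using (hB3 _ hq).exists_isFrostman hq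

end
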